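/- arXiv:1109.1440 — 8 statements merged into one kernel-verified Lean document; each statement's English description precedes it below -/
import Mathlib

section
/- Let C, D₁, D₂ be subgroups of G with C non-trivial, C ⊆ D₁ and C ⊆ D₂. Then 𝒞(C; D₁) ∩ 𝒞(C; D₂) = 𝒞(C; ⟨D₁, D₂⟩), where ⟨D₁, D₂⟩ is the subgroup of G generated by D₁ and D₂. -/
/-- The subgroup `K` of `Γ` is conjugate to the subgroup `H`. -/
def SubConj (Γ : Type*) [Group Γ] (H K : Subgroup Γ) : Prop :=
  ∃ γ : Γ, K = Subgroup.map (MulAut.conj γ).toMonoidHom H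


section
open scoped IsMulCommutative

lemma aux_prod_range_mul {M : Type*} [CommMonoid M] (f : ℕ → M) (k m : ℕ) :
    ∏ t ∈ Finset.range (k * m), f t =
      ∏ i ∈ Finset.range m, ∏ j ∈ Finset.range k, f (k * i + j) := by
  induction m with
  | zero => simp
  | succ m ih => rw [Nat.mul_succ, Finset.prod_range_add, ih, Finset.prod_range_succ]

lemma aux_pow {Q : Type*} [Group Q] (B : Subgroup Q) [B.Normal] [IsMulCommutative B]
    (a : B) (h : Q) (n : ℕ) :
    ((a : Q) * h) ^ n =
      ((∏ i ∈ Finset.range n, ((MulAut.conjNormal h : MulAut B) ^ i) a : B) : Q) * h ^ n := by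
  induction n with
  | zero => simp
  | succ n ih =>
    rw [pow_succ', ih, Finset.prod_range_succ']
    have : (∏ i ∈ Finset.range n, ((MulAut.conjNormal h : MulAut B) ^ (i + 1)) a) =
        (MulAut.conjNormal h : MulAut B)
          (∏ i ∈ Finset.range n, ((MulAut.conjNormal h : MulAut B) ^ i) a) := by
      rw [map_prod]
      refine Finset.prod_congr rfl fun i _ => ?_
      rw [pow_succ', MulAut.mul_apply]
    rw [this, mul_comm]
    simp only [pow_zero, MulAut.one_apply, Subgroup.coe_mul, MulAut.conjNormal_apply, pow_succ']
    group

/-- The norm. -/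
noncomputable def auxNorm {B : Type*} [CommGroup B] (c : MulAut B) (r : ℕ) : B →* B :=
  ∏ i ∈ Finset.range r, (c ^ i).toMonoidHom

lemma auxNorm_apply {B : Type*} [CommGroup B] (c : MulAut B) (r : ℕ) (a : B) :
    auxNorm c r a = ∏ i ∈ Finset.range r, (c ^ i) a := by
  simp [auxNorm, MonoidHom.finsetProd_apply]

lemma aux_split {Q A : Type*} [Group Q] [CommGroup A] [Finite A] (φ : Q →* A)
    [IsMulCommutative φ.ker] (x : Q) (hx : ∀ y, φ y ∈ Subgroup.zpowers (φ x))
    (b : φ.ker) (hb : (b : Q) = x ^ orderOf (φ x))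
    (H : Subgroup Q) (hH : H ⊓ φ.ker = ⊥) (u : ℤ) (hu : φ x ^ u ∈ H.map φ) :
    ∃ e : φ.ker, b ^ u = auxNorm (MulAut.conjNormal x) (orderOf (φ x)) e := by
  have hr : 0 < orderOf (φ x) := orderOf_pos _
  set r := orderOf (φ x) with hrdef
  let S : AddSubgroup ℤ :=
    { carrier := {k | φ x ^ k ∈ H.map φ}
      zero_mem' := by simpa using ⟨1, H.one_mem, map_one φ⟩
      add_mem' := by
        intro p q hp hq
        simp only [Set.mem_ofPred_eq] at *
        rw [zpow_add]; exact mul_mem hp hq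
      neg_mem' := by
        intro p hp
        simp only [Set.mem_ofPred_eq] at *
        rw [zpow_neg]; exact inv_mem hp }
  have hS : ∀ k, k ∈ S ↔ φ x ^ k ∈ H.map φ := fun k => Iff.rfl
  obtain ⟨k0, hk0⟩ := Int.subgroup_cyclic S
  have hdvd : ∀ k, k ∈ S ↔ k0 ∣ k := by
    intro k
    rw [hk0, ← AddSubgroup.zmultiples_eq_closure, Int.mem_zmultiples_iff]
  have hkr : k0.natAbs ∣ r := by
    have : (r : ℤ) ∈ S := by
      rw [hS, zpow_natCast, hrdef, pow_orderOf_eq_one]; exact one_mem _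
    exact Int.natAbs_dvd_natAbs.2 ((hdvd _).1 this)
  have hkS : ((k0.natAbs : ℕ) : ℤ) ∈ S := by
    rw [hdvd]; exact Int.dvd_natAbs.2 dvd_rfl
  have hku : ((k0.natAbs : ℕ) : ℤ) ∣ u := Int.natAbs_dvd.2 ((hdvd u).1 hu)
  generalize k0.natAbs = k at hkr hkS hku
  obtain ⟨r1, hr1⟩ := hkr
  obtain ⟨v, rfl⟩ := hku
  rw [hS, zpow_natCast] at hkS
  obtain ⟨h, hh, hhx⟩ := hkS
  let a : φ.ker := ⟨x ^ k * h⁻¹, by rw [MonoidHom.mem_ker]; simp [hhx]⟩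
  have hxa : x ^ k = (a : Q) * h := by simp [a]
  have hh1 : h ^ r1 = 1 := by
    have : h ^ r1 ∈ H ⊓ φ.ker := by
      refine ⟨pow_mem hh _, ?_⟩
      change φ (h ^ r1) = 1
      rw [map_pow, hhx, ← pow_mul, ← hr1, hrdef, pow_orderOf_eq_one]
    rwa [hH, Subgroup.mem_bot] at this
  have hconj : (MulAut.conjNormal h : MulAut φ.ker) = (MulAut.conjNormal x) ^ k := by
    rw [← map_pow, hxa, map_mul]
    have : (MulAut.conjNormal (a : Q) : MulAut φ.ker) = 1 := by
      ext y
      have := congrArg (fun z : φ.ker => (z : Q)) (mul_comm a y)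
      simp only [Subgroup.coe_mul] at this
      rw [MulAut.conjNormal_apply, this]; simp
    rw [this, one_mul]
  have hb1 : b = ∏ i ∈ Finset.range r1, ((MulAut.conjNormal x : MulAut φ.ker) ^ (k * i)) a := by
    apply Subtype.ext
    rw [hb, hr1, pow_mul, hxa, aux_pow, hh1, mul_one, hconj]
    simp only [pow_mul]
  have hcb : ∀ j : ℕ, ((MulAut.conjNormal x : MulAut φ.ker) ^ j) b = b := by
    intro j
    apply Subtype.ext
    rw [← map_pow, MulAut.conjNormal_apply, hb]
    group
  have hbk : b ^ k = auxNorm (MulAut.conjNormal x) r a := by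
    rw [auxNorm_apply, hr1, aux_prod_range_mul, Finset.prod_comm]
    have : ∀ j ∈ Finset.range k, ∏ i ∈ Finset.range r1,
        ((MulAut.conjNormal x : MulAut φ.ker) ^ (k * i + j)) a = b := by
      intro j _
      rw [← hcb j]
      conv_rhs => rw [hb1]
      rw [map_prod]
      refine Finset.prod_congr rfl fun i _ => ?_
      rw [add_comm, pow_add, MulAut.mul_apply]
    rw [Finset.prod_congr rfl this]
    simp
  exact ⟨a ^ v, by rw [map_zpow, ← hbk, zpow_mul, zpow_natCast]⟩

lemma aux_main {Q A : Type*} [Group Q] [CommGroup A] [Finite A] [IsCyclic A] (φ : Q →* A)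
    [IsMulCommutative φ.ker] (H₁ H₂ : Subgroup Q) (h₁ : H₁ ⊓ φ.ker = ⊥) (h₂ : H₂ ⊓ φ.ker = ⊥)
    (h : H₁ ⊔ H₂ = ⊤) : ∃ H : Subgroup Q, H ⊓ φ.ker = ⊥ ∧ H.map φ = φ.range := by
  obtain ⟨⟨_, x, rfl⟩, hx⟩ := IsCyclic.exists_generator (α := φ.range)
  have hx' : ∀ y, φ y ∈ Subgroup.zpowers (φ x) := by
    intro y
    obtain ⟨k, hk⟩ := hx ⟨φ y, y, rfl⟩
    exact ⟨k, congrArg Subtype.val hk⟩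
  let b : φ.ker := ⟨x ^ orderOf (φ x), by rw [MonoidHom.mem_ker, map_pow, pow_orderOf_eq_one]⟩
  have hb : (b : Q) = x ^ orderOf (φ x) := rfl
  have hmem : φ x ∈ H₁.map φ ⊔ H₂.map φ := by
    rw [← Subgroup.map_sup, h]; exact ⟨x, trivial, rfl⟩
  obtain ⟨y, hy, z, hz, hyz⟩ := Subgroup.mem_sup.1 hmem
  obtain ⟨u, hu⟩ : y ∈ Subgroup.zpowers (φ x) := by
    obtain ⟨y', _, rfl⟩ := hy; exact hx' y'
  have hu' : φ x ^ u = y := hu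
  have hz' : φ x ^ (1 - u) = z := by
    rw [zpow_sub, hu', zpow_one, ← hyz]; simp
  obtain ⟨e₁, he₁⟩ := aux_split φ x hx' b hb H₁ h₁ u (hu' ▸ hy)
  obtain ⟨e₂, he₂⟩ := aux_split φ x hx' b hb H₂ h₂ (1 - u) (hz' ▸ hz)
  have he : b = auxNorm (MulAut.conjNormal x) (orderOf (φ x)) (e₁ * e₂) := by
    rw [map_mul, ← he₁, ← he₂, ← zpow_add]; simp
  generalize e₁ * e₂ = e at he
  have hpow : (((e⁻¹ : φ.ker) : Q) * x) ^ orderOf (φ x) = 1 := by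
    rw [aux_pow, ← auxNorm_apply, map_inv, ← he, ← hb]; simp
  have hφ : φ (((e⁻¹ : φ.ker) : Q) * x) = φ x := by
    rw [map_mul, (e⁻¹).2, one_mul]
  refine ⟨Subgroup.zpowers (((e⁻¹ : φ.ker) : Q) * x), ?_, ?_⟩
  · rw [eq_bot_iff]
    rintro _ ⟨⟨k, rfl⟩, hk⟩
    have hk' : φ ((((e⁻¹ : φ.ker) : Q) * x) ^ k) = 1 := hk
    rw [map_zpow, hφ] at hk'
    obtain ⟨t, rfl⟩ := orderOf_dvd_iff_zpow_eq_one.2 hk'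
    rw [Subgroup.mem_bot]
    simp only [zpow_mul, zpow_natCast, hpow, one_zpow]
  · rw [MonoidHom.map_zpowers, hφ]
    apply le_antisymm
    · rw [Subgroup.zpowers_le]; exact ⟨x, rfl⟩
    · rintro _ ⟨y, rfl⟩; exact hx' y

/-- Relative version, with `P = ker ψ` and `P / K` abelian. -/
lemma aux_rel {N A : Type*} [Group N] [CommGroup A] [Finite A] [IsCyclic A] (ψ : N →* A)
    (K : Subgroup N) [K.Normal]
    (hcomm : ∀ p q : N, p ∈ ψ.ker → q ∈ ψ.ker → (p * q)⁻¹ * (q * p) ∈ K)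
    (H₁ H₂ : Subgroup N) (h₁ : H₁ ⊓ ψ.ker = K) (h₂ : H₂ ⊓ ψ.ker = K)
    (h : H₁ ⊔ H₂ = ⊤) : ∃ H : Subgroup N, H ⊓ ψ.ker = K ∧ H.map ψ = ψ.range := by
  have hKψ : K ≤ ψ.ker := h₁ ▸ inf_le_right
  let φ : N ⧸ K →* A := QuotientGroup.lift K ψ hKψ
  have hφ : ∀ g : N, φ (QuotientGroup.mk' K g) = ψ g := fun g => rfl
  haveI : IsMulCommutative φ.ker := ⟨⟨by
    rintro ⟨p, hp⟩ ⟨q, hq⟩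
    obtain ⟨p, rfl⟩ := QuotientGroup.mk'_surjective K p
    obtain ⟨q, rfl⟩ := QuotientGroup.mk'_surjective K q
    apply Subtype.ext
    exact QuotientGroup.eq.2 (hcomm p q hp hq)⟩⟩
  have key : ∀ H : Subgroup N, H ⊓ ψ.ker = K → H.map (QuotientGroup.mk' K) ⊓ φ.ker = ⊥ := by
    intro H hH
    rw [eq_bot_iff]
    rintro _ ⟨⟨g, hg, rfl⟩, hg'⟩
    have : g ∈ H ⊓ ψ.ker := ⟨hg, hg'⟩
    rw [hH] at this
    rw [Subgroup.mem_bot]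
    exact (QuotientGroup.eq_one_iff g).2 this
  obtain ⟨H, hH, hH'⟩ := aux_main φ (H₁.map (QuotientGroup.mk' K)) (H₂.map (QuotientGroup.mk' K))
    (key _ h₁) (key _ h₂) (by
      rw [← Subgroup.map_sup, h]
      exact Subgroup.map_top_of_surjective _ (QuotientGroup.mk'_surjective K))
  refine ⟨H.comap (QuotientGroup.mk' K), ?_, ?_⟩
  · ext g
    constructor
    · rintro ⟨hg, hg'⟩
      have : QuotientGroup.mk' K g ∈ H ⊓ φ.ker := ⟨hg, hg'⟩
      rw [hH, Subgroup.mem_bot] at this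
      exact (QuotientGroup.eq_one_iff g).1 this
    · intro hg
      refine ⟨?_, hKψ hg⟩
      have : QuotientGroup.mk' K g = 1 := (QuotientGroup.eq_one_iff g).2 hg
      change QuotientGroup.mk' K g ∈ H
      rw [this]; exact one_mem _
  · apply le_antisymm
    · rintro _ ⟨g, _, rfl⟩; exact ⟨g, rfl⟩
    · rintro _ ⟨g, rfl⟩
      have : φ (QuotientGroup.mk' K g) ∈ H.map φ := by rw [hH']; exact ⟨_, rfl⟩
      obtain ⟨q, hq, hqg⟩ := this
      obtain ⟨q, rfl⟩ := QuotientGroup.mk'_surjective K q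
      exact ⟨q, hq, hqg⟩

/-- Conjugating so that the intersection is exactly `K`. -/
lemma aux_conj {Γ : Type*} [Group Γ] (L : Subgroup Γ) [L.Normal]
    (hab : ∀ a b : Γ ⧸ L, a * b = b * a) (C D : Subgroup (Γ ⧸ L)) (K H : Subgroup Γ)
    (hH : H.map (QuotientGroup.mk' L) = D)
    (hc : SubConj Γ (H ⊓ C.comap (QuotientGroup.mk' L)) K) :
    ∃ H' : Subgroup Γ, H'.map (QuotientGroup.mk' L) = D ∧
      H' ⊓ C.comap (QuotientGroup.mk' L) = K := by
  obtain ⟨γ, rfl⟩ := hc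
  have hπ : ∀ g : Γ, QuotientGroup.mk' L (MulAut.conj γ g) = QuotientGroup.mk' L g := by
    intro g
    rw [MulAut.conj_apply, map_mul, map_mul, hab (QuotientGroup.mk' L γ), mul_assoc, ← map_mul]
    simp
  refine ⟨H.map (MulAut.conj γ).toMonoidHom, ?_, ?_⟩
  · rw [← hH, Subgroup.map_map]
    congr 1
    ext g; exact hπ g
  · ext g
    constructor
    · rintro ⟨⟨y, hy, rfl⟩, hg⟩
      refine ⟨y, ⟨hy, ?_⟩, rfl⟩
      have : QuotientGroup.mk' L (MulAut.conj γ y) ∈ C := hg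
      rw [hπ] at this; exact this
    · rintro ⟨y, ⟨hy, hy'⟩, rfl⟩
      refine ⟨⟨y, hy, rfl⟩, ?_⟩
      change QuotientGroup.mk' L (MulAut.conj γ y) ∈ C
      rw [hπ]; exact hy'

lemma aux_down {Γ : Type*} [Group Γ] (L : Subgroup Γ) [L.Normal]
    (C D E : Subgroup (Γ ⧸ L)) (hCD : C ≤ D) (hDE : D ≤ E) (K H : Subgroup Γ)
    (hH : H.map (QuotientGroup.mk' L) = E)
    (hc : SubConj Γ (H ⊓ C.comap (QuotientGroup.mk' L)) K) :
    ∃ H' : Subgroup Γ, H'.map (QuotientGroup.mk' L) = D ∧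
      SubConj Γ (H' ⊓ C.comap (QuotientGroup.mk' L)) K := by
  refine ⟨H ⊓ D.comap (QuotientGroup.mk' L), ?_, ?_⟩
  · apply le_antisymm
    · rintro _ ⟨g, ⟨_, hg⟩, rfl⟩; exact hg
    · intro d hd
      have : d ∈ H.map (QuotientGroup.mk' L) := by rw [hH]; exact hDE hd
      obtain ⟨g, hg, rfl⟩ := this
      exact ⟨g, ⟨hg, hd⟩, rfl⟩
  · rwa [inf_assoc, inf_eq_right.2 (Subgroup.comap_mono hCD)]

end

/-- Let `1 → L → Γ → G → 1` be as in the paper (`L ≅ ℤⁿ` normal, `G = Γ/L` cyclic of order `m`,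
conjugation action of `G` on `L` free outside the origin), and let `C, D₁, D₂ ⊆ G` be subgroups
with `C` non-trivial, `C ≤ D₁` and `C ≤ D₂`.  Then `𝒞(C; D₁) ∩ 𝒞(C; D₂) = 𝒞(C; ⟨D₁, D₂⟩)`:
for every subgroup `K ⊆ Γ` with `π(K) = C`, the class of `K` lies in the image of both
`i_{C⊆D₁}` and `i_{C⊆D₂}` if and only if it lies in the image of `i_{C⊆D₁⊔D₂}`. -/
theorem statement4 (n m : ℕ) (hn : 1 ≤ n) (hm : 1 ≤ m)
    (Γ : Type*) [Group Γ] (L : Subgroup Γ) [L.Normal]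
    (hL : Nonempty (L ≃* Multiplicative (Fin n → ℤ)))
    (hcyc : IsCyclic (Γ ⧸ L)) (hcard : Nat.card (Γ ⧸ L) = m)
    (hfree : ∀ γ : Γ, γ ∉ L → ∀ x : Γ, x ∈ L → x ≠ 1 → γ * x * γ⁻¹ ≠ x)
    (C D₁ D₂ : Subgroup (Γ ⧸ L)) (hC : C ≠ ⊥) (hCD₁ : C ≤ D₁) (hCD₂ : C ≤ D₂)
    (K : Subgroup Γ) (hK : Subgroup.map (QuotientGroup.mk' L) K = C) :
    ((∃ H₁ : Subgroup Γ, Subgroup.map (QuotientGroup.mk' L) H₁ = D₁ ∧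
        SubConj Γ (H₁ ⊓ Subgroup.comap (QuotientGroup.mk' L) C) K) ∧
     (∃ H₂ : Subgroup Γ, Subgroup.map (QuotientGroup.mk' L) H₂ = D₂ ∧
        SubConj Γ (H₂ ⊓ Subgroup.comap (QuotientGroup.mk' L) C) K)) ↔
    (∃ H : Subgroup Γ, Subgroup.map (QuotientGroup.mk' L) H = D₁ ⊔ D₂ ∧
        SubConj Γ (H ⊓ Subgroup.comap (QuotientGroup.mk' L) C) K) := by
  have hab : ∀ a b : Γ ⧸ L, a * b = b * a := fun a b => hcyc.isMulCommutative.is_comm.comm a b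
  constructor
  · rintro ⟨⟨H₁, hH₁, hc₁⟩, ⟨H₂, hH₂, hc₂⟩⟩
    obtain ⟨H₁, hH₁, hK₁⟩ := aux_conj L hab C D₁ K H₁ hH₁ hc₁
    obtain ⟨H₂, hH₂, hK₂⟩ := aux_conj L hab C D₂ K H₂ hH₂ hc₂
    haveI : Finite (Γ ⧸ L) := Nat.finite_of_card_ne_zero (by omega)
    letI : CommGroup (Γ ⧸ L) := { (inferInstance : Group (Γ ⧸ L)) with mul_comm := hab }
    have hKC : K ≤ C.comap (QuotientGroup.mk' L) := hK₁ ▸ inf_le_right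
    have hLcomm : ∀ a ∈ L, ∀ b ∈ L, a * b = b * a := by
      obtain ⟨e⟩ := hL
      intro a ha b hb
      have : (⟨a, ha⟩ : L) * ⟨b, hb⟩ = ⟨b, hb⟩ * ⟨a, ha⟩ := by
        apply e.injective
        rw [map_mul, map_mul, mul_comm]
      exact congrArg Subtype.val this
    have hPn : (C.comap (QuotientGroup.mk' L)).Normal := inferInstance
    have hnorm : ∀ H : Subgroup Γ, H ⊓ C.comap (QuotientGroup.mk' L) = K →
        H ≤ Subgroup.normalizer (K : Set Γ) := by
      intro H hH g hg
      have conjm : ∀ g ∈ H, ∀ k ∈ K, g * k * g⁻¹ ∈ K := by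
        intro g hg k hk
        rw [← hH] at hk ⊢
        exact ⟨H.mul_mem (H.mul_mem hg hk.1) (H.inv_mem hg), hPn.conj_mem _ hk.2 _⟩
      rw [Subgroup.mem_normalizer_iff]
      intro k
      refine ⟨conjm g hg k, fun hk => ?_⟩
      have := conjm g⁻¹ (inv_mem hg) _ hk
      simpa [mul_assoc] using this
    let N : Subgroup Γ := H₁ ⊔ H₂
    have hN : N ≤ Subgroup.normalizer (K : Set Γ) := sup_le (hnorm H₁ hK₁) (hnorm H₂ hK₂)
    have hconjK : ∀ g ∈ N, ∀ k ∈ K, g * k * g⁻¹ ∈ K := fun g hg k hk =>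
      (Subgroup.mem_normalizer_iff.1 (hN hg) k).1 hk
    have hKH₁ : K ≤ H₁ := hK₁ ▸ inf_le_left
    have hKN : K ≤ N := hKH₁.trans le_sup_left
    let ψ : N →* (Γ ⧸ L) ⧸ C :=
      (QuotientGroup.mk' C).comp ((QuotientGroup.mk' L).comp N.subtype)
    have hψ : ∀ g : N, g ∈ ψ.ker ↔ (g : Γ) ∈ C.comap (QuotientGroup.mk' L) := by
      intro g
      exact QuotientGroup.eq_one_iff (N := C) (QuotientGroup.mk' L (g : Γ))
    haveI : (K.subgroupOf N).Normal := ⟨fun k hk g => hconjK g g.2 k hk⟩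
    have hs : ∀ H : Subgroup Γ, H ⊓ C.comap (QuotientGroup.mk' L) = K →
        H.subgroupOf N ⊓ ψ.ker = K.subgroupOf N := by
      intro H hH
      ext g
      rw [Subgroup.mem_inf, hψ, Subgroup.mem_subgroupOf, Subgroup.mem_subgroupOf, ← hH,
        Subgroup.mem_inf]
    haveI : IsCyclic ((Γ ⧸ L) ⧸ C) :=
      isCyclic_of_surjective (QuotientGroup.mk' C) (QuotientGroup.mk'_surjective C)
    have hdec : ∀ p ∈ N, p ∈ C.comap (QuotientGroup.mk' L) → ∃ l ∈ L, l ∈ N ∧ ∃ k ∈ K,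
        p = l * k := by
      intro p hpN hp
      have hp' : QuotientGroup.mk' L p ∈ K.map (QuotientGroup.mk' L) := by rw [hK]; exact hp
      obtain ⟨k, hk, hkp⟩ := hp'
      refine ⟨p * k⁻¹, ?_, mul_mem hpN (inv_mem (hKN hk)), k, hk, by group⟩
      rw [← QuotientGroup.eq_one_iff]
      change QuotientGroup.mk' L (p * k⁻¹) = 1
      rw [map_mul, map_inv, hkp, mul_inv_cancel]
    obtain ⟨H, hH, hH'⟩ := aux_rel ψ (K.subgroupOf N) (by
      rintro ⟨p, hpN⟩ ⟨q, hqN⟩ hp hq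
      rw [hψ] at hp hq
      rw [Subgroup.mem_subgroupOf]
      change (p * q)⁻¹ * (q * p) ∈ K
      obtain ⟨l, hl, hlN, k, hk, rfl⟩ := hdec p hpN hp
      obtain ⟨l', hl', hlN', k', hk', rfl⟩ := hdec q hqN hq
      have e : (l * k * (l' * k'))⁻¹ * (l' * k' * (l * k)) =
          k'⁻¹ * (l'⁻¹ * k⁻¹ * l'⁻¹⁻¹) * ((l * l')⁻¹ * (l' * l)) * (l⁻¹ * k' * l⁻¹⁻¹) * k := by
        group
      rw [e, hLcomm l' hl' l hl, inv_mul_cancel, mul_one]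
      exact mul_mem (mul_mem (mul_mem (inv_mem hk') (hconjK _ (inv_mem hlN') _ (inv_mem hk)))
        (hconjK _ (inv_mem hlN) _ hk')) hk)
      (H₁.subgroupOf N) (H₂.subgroupOf N) (hs _ hK₁) (hs _ hK₂) (by
        rw [← Subgroup.subgroupOf_sup le_sup_left le_sup_right]
        exact Subgroup.subgroupOf_self N)
    have hmapN : N.map (QuotientGroup.mk' L) = D₁ ⊔ D₂ := by
      rw [← hH₁, ← hH₂, ← Subgroup.map_sup]
    have hint : H.map N.subtype ⊓ C.comap (QuotientGroup.mk' L) = K := by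
      ext g
      constructor
      · rintro ⟨⟨y, hy, rfl⟩, hg⟩
        have : y ∈ H ⊓ ψ.ker := ⟨hy, (hψ y).2 hg⟩
        rw [hH] at this
        exact this
      · intro hg
        have : (⟨g, hKN hg⟩ : N) ∈ H ⊓ ψ.ker := by rw [hH]; exact hg
        exact ⟨⟨_, this.1, rfl⟩, hKC hg⟩
    refine ⟨H.map N.subtype, ?_, 1, ?_⟩
    · apply le_antisymm
      · rw [← hmapN]
        apply Subgroup.map_mono
        rintro _ ⟨y, _, rfl⟩; exact y.2
      · rw [← hmapN]
        rintro _ ⟨g, hg, rfl⟩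
        have : ψ ⟨g, hg⟩ ∈ H.map ψ := by rw [hH']; exact ⟨_, rfl⟩
        obtain ⟨y, hy, hyg⟩ := this
        have hc : (QuotientGroup.mk' L (y : Γ))⁻¹ * QuotientGroup.mk' L g ∈ C :=
          QuotientGroup.eq.1 hyg
        rw [← hK] at hc
        obtain ⟨k, hk, hkg⟩ := hc
        have hkH : k ∈ H.map N.subtype := (hint.symm ▸ hk : k ∈ H.map N.subtype ⊓ _).1
        refine ⟨y * k, mul_mem ⟨y, hy, rfl⟩ hkH, ?_⟩
        rw [map_mul, hkg, mul_inv_cancel_left]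
    · rw [hint]
      ext g
      simp
  · rintro ⟨H, hH, hc⟩
    exact ⟨aux_down L C D₁ _ hCD₁ le_sup_left K H hH hc,
      aux_down L C D₂ _ hCD₂ le_sup_right K H hH hc⟩
end

section
/- Let p be a prime and r ≥ 1, and let 1 ≤ j ≤ r. Let Φ denote the p^r-th cyclotomic polynomial, R := ℤ[X]/(Φ), and x the residue class of X in R. Let C be a cyclic group of order p^{r−j} with generator c, and regard the quotient R/(x^{p^{r−j}} − 1)R as a module over the group ring ℤ[C] by letting c act as multiplication by the class of x. Then R/(x^{p^{r−j}} − 1)R is isomorphic as a ℤ[C]-module to the group algebra (ℤ/p)[C] (with C acting by left translation). -/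
section
open Polynomial

theorem aux_phi {A : Type*} [Ring A] (x : A) (p r j : ℕ) (hp : p.Prime) (hj1 : 1 ≤ j)
    (hjr : j ≤ r) (hx : x ^ (p ^ (r - j)) = 1) :
    aeval x (cyclotomic (p ^ r) ℤ) = (p : A) := by
  have := Fact.mk hp
  obtain ⟨m, rfl⟩ : ∃ m, r = m + 1 := ⟨r - 1, by omega⟩
  rw [cyclotomic_prime_pow_eq_geom_sum hp]
  have h1 : x ^ (p ^ m) = 1 := by
    have : p ^ m = p ^ (m + 1 - j) * p ^ (j - 1) := by
      rw [← pow_add]; congr 1; omega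
    rw [this, pow_mul, hx, one_pow]
  simp [h1]

theorem aux_ker (p n : ℕ) (C : Type*) [Group C] (c : C) (hn : 0 < n)
    (ho : orderOf c = n) (g : ℤ[X])
    (hg : aeval (MonoidAlgebra.single c (1 : ZMod p)) g = 0) :
    ∃ q h : ℤ[X], g = (X ^ n - 1) * q + (p : ℤ[X]) * h := by
  classical
  have hm : (X ^ n - 1 : ℤ[X]).Monic := by
    simpa using monic_X_pow_sub_C (1 : ℤ) hn.ne'
  have hdeg : (g %ₘ (X ^ n - 1)).degree < n := by
    have := degree_modByMonic_lt g hm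
    have h2 : (X ^ n - 1 : ℤ[X]).degree = n := by
      simpa using degree_X_pow_sub_C hn (1 : ℤ)
    rwa [h2] at this
  have hcn : c ^ n = 1 := ho ▸ pow_orderOf_eq_one c
  have hs : aeval (MonoidAlgebra.single c (1 : ZMod p)) (g %ₘ (X ^ n - 1)) = 0 := by
    have := congrArg (aeval (MonoidAlgebra.single c (1 : ZMod p))) (modByMonic_add_div g (X ^ n - 1))
    rw [map_add, map_mul, hg] at this
    simpa [MonoidAlgebra.single_pow, hcn, MonoidAlgebra.one_def] using this
  have hdvd : Polynomial.C (p : ℤ) ∣ g %ₘ (X ^ n - 1) := by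
    rw [C_dvd_iff_dvd_coeff]
    intro k
    by_cases hk : k < n
    · rw [aeval_eq_sum_range' (n := n)] at hs
      · have h3 := congrArg (fun f : MonoidAlgebra (ZMod p) C => f.coeff (c ^ k)) hs
        rw [← ZMod.intCast_zmod_eq_zero_iff_dvd]
        have h4 : ∀ i ∈ Finset.range n, i ≠ k →
            ((g %ₘ (X ^ n - 1)).coeff i • MonoidAlgebra.single (c ^ i) (1 : ZMod p)).coeff (c ^ k)
              = 0 := by
          intro i hi hik
          have : c ^ i ≠ c ^ k := fun he => hik (pow_injOn_Iio_orderOf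
            (by simpa [ho] using hi) (by simpa [ho] using hk) he)
          simp [MonoidAlgebra.coeff_single, Finsupp.single_apply, this]
        simp only [MonoidAlgebra.single_pow, one_pow, MonoidAlgebra.coeff_sum,
          Finsupp.finsetSum_apply] at h3
        rw [Finset.sum_eq_single_of_mem k (Finset.mem_range.mpr hk) h4] at h3
        simpa using h3
      · by_cases h0 : g %ₘ (X ^ n - 1) = 0
        · simpa [h0] using hn
        · exact (natDegree_lt_iff_degree_lt h0).mpr hdeg
    · rw [coeff_eq_zero_of_degree_lt]
      · simp
      · exact hdeg.trans_le (by exact_mod_cast not_lt.mp hk)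
  obtain ⟨h, hh⟩ := hdvd
  refine ⟨g /ₘ (X ^ n - 1), h, ?_⟩
  conv_lhs => rw [← modByMonic_add_div g (X ^ n - 1), hh]
  simp [add_comm]

theorem aux_surj (p : ℕ) (hp : p.Prime) (C : Type*) [Group C] [Finite C] (c : C)
    (hc : Subgroup.zpowers c = ⊤) :
    Function.Surjective (aeval (R := ℤ) (MonoidAlgebra.single c (1 : ZMod p))) := by
  have := Fact.mk hp
  intro a
  induction a using MonoidAlgebra.induction_on with
  | of a =>
    have : a ∈ Subgroup.zpowers c := hc ▸ Subgroup.mem_top a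
    rw [← mem_powers_iff_mem_zpowers] at this
    obtain ⟨i, rfl⟩ := this
    exact ⟨X ^ i, by simp [MonoidAlgebra.single_pow]⟩
  | add a b ha hb =>
    obtain ⟨u, rfl⟩ := ha
    obtain ⟨v, rfl⟩ := hb
    exact ⟨u + v, map_add _ _ _⟩
  | smul k a ha =>
    obtain ⟨u, rfl⟩ := ha
    refine ⟨(k.val : ℤ) • u, ?_⟩
    rw [map_smul]
    conv_rhs => rw [← ZMod.natCast_zmod_val k]
    rw [Nat.cast_smul_eq_nsmul ℤ, Nat.cast_smul_eq_nsmul (ZMod p)]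

theorem aux_pi (p r j : ℕ) (hp : p.Prime) (hj1 : 1 ≤ j) (hjr : j ≤ r) :
    ∃ v : ℤ[X], (p : ℤ[X]) = cyclotomic (p ^ r) ℤ - (X ^ (p ^ (r - j)) - 1) * v := by
  suffices h : (X ^ (p ^ (r - j)) - 1 : ℤ[X]) ∣ cyclotomic (p ^ r) ℤ - (p : ℤ[X]) by
    obtain ⟨v, hv⟩ := h
    exact ⟨v, by rw [← hv]; ring⟩
  have := Fact.mk hp
  obtain ⟨m, rfl⟩ : ∃ m, r = m + 1 := ⟨r - 1, by omega⟩
  have h1 : cyclotomic (p ^ (m + 1)) ℤ - (p : ℤ[X]) =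
      ∑ i ∈ Finset.range p, (((X : ℤ[X]) ^ p ^ m) ^ i - 1) := by
    rw [cyclotomic_prime_pow_eq_geom_sum hp, Finset.sum_sub_distrib]
    simp
  rw [h1]
  refine Finset.dvd_sum fun i _ => ?_
  have h2 : p ^ m = p ^ (m + 1 - j) * p ^ (j - 1) := by
    rw [← pow_add]; congr 1; omega
  rw [h2, pow_mul, ← pow_mul]
  simpa using sub_dvd_pow_sub_pow ((X : ℤ[X]) ^ p ^ (m + 1 - j)) 1 (p ^ (j - 1) * i)
end

/-- Let `p` be a prime, `r ≥ 1`, `1 ≤ j ≤ r`.  Let `R = ℤ[X]/(Φ_{p^r})` be the ring of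
cyclotomic integers `ℤ[ζ_{p^r}]`, with `x` the class of `X`, and let `B = R/(x^{p^{r−j}} − 1)R`.
Let `C` be a cyclic group of order `p^{r−j}` with generator `c`.  Then `B` is isomorphic, as a
module over `ℤ[C]` where `c` acts as multiplication by the class of `x`, to the group algebra
`(ℤ/p)[C]` with `C` acting by left translation: there is an additive isomorphism `φ` with
`φ(x̄·y) = c•φ(y)` for all `y`. -/
theorem statement9 (p r j : ℕ) (hp : p.Prime) (hr : 1 ≤ r) (hj1 : 1 ≤ j) (hjr : j ≤ r)
    (C : Type*) [Group C] [IsCyclic C] (hC : Nat.card C = p ^ (r - j))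
    (c : C) (hc : Subgroup.zpowers c = ⊤) :
    ∃ φ :
      ((Polynomial ℤ ⧸ Ideal.span {Polynomial.cyclotomic (p ^ r) ℤ}) ⧸
        Ideal.span {(Ideal.Quotient.mk (Ideal.span {Polynomial.cyclotomic (p ^ r) ℤ})
            (Polynomial.X : Polynomial ℤ)) ^ (p ^ (r - j)) - 1}) ≃+
      MonoidAlgebra (ZMod p) C,
    ∀ y, φ ((Ideal.Quotient.mk _ (Ideal.Quotient.mk _ (Polynomial.X : Polynomial ℤ))) * y) =
      MonoidAlgebra.single c (1 : ZMod p) * φ y := by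
  classical
  have hn : 0 < p ^ (r - j) := pow_pos hp.pos _
  have : Finite C := Nat.finite_of_card_ne_zero (by rw [hC]; exact hn.ne')
  have ho : orderOf c = p ^ (r - j) := by
    rw [← hC, ← Nat.card_zpowers, hc]; simp
  have hcn : c ^ (p ^ (r - j)) = 1 := ho ▸ pow_orderOf_eq_one c
  have hxn : (MonoidAlgebra.single c (1 : ZMod p)) ^ (p ^ (r - j)) = 1 := by
    simp [MonoidAlgebra.single_pow, hcn, MonoidAlgebra.one_def]
  let f : Polynomial ℤ →+* MonoidAlgebra (ZMod p) C :=
    (Polynomial.aeval (R := ℤ) (MonoidAlgebra.single c (1 : ZMod p))).toRingHom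
  have hp0 : (p : MonoidAlgebra (ZMod p) C) = 0 := by
    rw [← map_natCast (algebraMap (ZMod p) (MonoidAlgebra (ZMod p) C))]; simp
  have hf0 : ∀ a ∈ Ideal.span {Polynomial.cyclotomic (p ^ r) ℤ}, f a = 0 := by
    intro a ha
    obtain ⟨b, rfl⟩ := Ideal.mem_span_singleton.mp ha
    rw [map_mul]
    have : f (Polynomial.cyclotomic (p ^ r) ℤ) = 0 := (aux_phi _ p r j hp hj1 hjr hxn).trans hp0
    rw [this, zero_mul]
  let f1 := Ideal.Quotient.lift _ f hf0
  have hfX : f Polynomial.X = MonoidAlgebra.single c (1 : ZMod p) := Polynomial.aeval_X _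
  have hf1 : ∀ a ∈ Ideal.span {(Ideal.Quotient.mk (Ideal.span {Polynomial.cyclotomic (p ^ r) ℤ})
            (Polynomial.X : Polynomial ℤ)) ^ (p ^ (r - j)) - 1}, f1 a = 0 := by
    intro a ha
    obtain ⟨b, rfl⟩ := Ideal.mem_span_singleton.mp ha
    rw [map_mul, map_sub, map_pow, map_one]
    have : f1 (Ideal.Quotient.mk _ Polynomial.X) = MonoidAlgebra.single c (1 : ZMod p) := hfX
    rw [this, hxn, sub_self, zero_mul]
  let f2 := Ideal.Quotient.lift _ f1 hf1
  have hf2 : ∀ g, f2 (Ideal.Quotient.mk _ (Ideal.Quotient.mk _ g)) = f g := fun g => rfl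
  have hbij : Function.Bijective f2 := by
    constructor
    · rw [injective_iff_map_eq_zero]
      intro y hy
      obtain ⟨y, rfl⟩ := Ideal.Quotient.mk_surjective y
      obtain ⟨g, rfl⟩ := Ideal.Quotient.mk_surjective y
      rw [hf2] at hy
      obtain ⟨q, h, rfl⟩ := aux_ker p _ C c hn ho g hy
      obtain ⟨v, hv⟩ := aux_pi p r j hp hj1 hjr
      rw [Ideal.Quotient.eq_zero_iff_mem, Ideal.mem_span_singleton]
      refine ⟨Ideal.Quotient.mk _ (q - v * h), ?_⟩
      rw [← map_pow, ← map_one (Ideal.Quotient.mk _), ← map_sub, ← map_mul, Ideal.Quotient.eq,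
        Ideal.mem_span_singleton]
      exact ⟨h, by rw [hv]; ring⟩
    · intro a
      obtain ⟨g, rfl⟩ := aux_surj p hp C c hc a
      exact ⟨_, hf2 g⟩
  refine ⟨(RingEquiv.ofBijective f2 hbij).toAddEquiv, fun y => ?_⟩
  change f2 _ = _ * f2 y
  rw [map_mul, hf2, hfX]
end

section
/- Let p be a prime and r, k ≥ 1. Let H be a cyclic group of order p^r and let S be a finite set with p^k elements. Let H act on the set of all functions f : H → S by translation of the domain, (h·f)(x) = f(h⁻¹x). Then the number of H-orbits of this action equals p^k + Σ_{i=0}^{r−1} ( p^{k·p^{r−i} − r + i} − p^{k·p^{r−i−1} − r + i} ). -/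
theorem abel_aux (p : ℕ) (hp : p.Prime) (B : ℕ → ℤ) (n : ℕ) :
    ∑ i ∈ Finset.range n, (p : ℤ) ^ i * (B i - B (i + 1)) + (p : ℤ) ^ n * B n =
      ∑ j ∈ Finset.range (n + 1), (Nat.totient (p ^ j) : ℤ) * B j := by
  induction n with
  | zero => simp
  | succ n ih =>
    rw [Finset.sum_range_succ _ (n + 1), ← ih, Finset.sum_range_succ _ n,
      Nat.totient_prime_pow_succ hp, Nat.cast_mul, Nat.cast_sub hp.one_le]
    push_cast
    ring

theorem le_aux (p k m : ℕ) (hp : p.Prime) (hk : 1 ≤ k) : m + 1 ≤ k * p ^ m := by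
  have h1 : m < p ^ m := Nat.lt_pow_self hp.one_lt
  nlinarith

theorem fixed_aux {H S : Type*} [Group H] [Finite H] (h : H) :
    Nat.card {f : H → S // ∀ x, f (h⁻¹ * x) = f x} =
      Nat.card S ^ (Nat.card H / orderOf h) := by
  have e : {f : H → S // ∀ x, f (h⁻¹ * x) = f x} ≃
      (Quotient (QuotientGroup.rightRel (Subgroup.zpowers h)) → S) :=
    { toFun := fun f => Quotient.lift f.1 (by
        intro a b hab
        have hab' := QuotientGroup.rightRel_apply.mp hab
        obtain ⟨n, hn⟩ := Subgroup.mem_zpowers_iff.mp hab'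
        have key : ∀ n : ℤ, ∀ x, f.1 (h ^ n * x) = f.1 x := by
          intro n
          induction n using Int.induction_on with
          | zero => simp
          | succ i ih =>
            intro x
            rw [← ih x, ← f.2 (h ^ ((i : ℤ) + 1) * x)]
            congr 1
            group
          | pred i ih =>
            intro x
            rw [← ih x, ← f.2 (h ^ (-(i : ℤ)) * x)]
            congr 1
            group
        have := key n a
        rw [hn] at this
        simpa using this.symm)
      invFun := fun g => ⟨fun x => g (Quotient.mk _ x), by
        intro x
        refine congrArg g (Quotient.sound ?_)
        apply QuotientGroup.rightRel_apply.mpr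
        simp⟩
      left_inv := fun f => by ext x; rfl
      right_inv := fun g => by
        ext x
        induction x using Quotient.inductionOn
        rfl }
  rw [Nat.card_congr e, Nat.card_fun]
  congr 1
  rw [Nat.card_congr (QuotientGroup.quotientRightRelEquivQuotientLeftRel _)]
  have := Subgroup.card_mul_index (Subgroup.zpowers h)
  rw [Nat.card_zpowers] at this
  rw [← this, Nat.mul_div_cancel_left _ (orderOf_pos h)]
  rfl

theorem burnside_aux {H S : Type*} [Group H] [Finite H] [Finite S] [Fintype H] :
    ∑ h : H, Nat.card S ^ (Nat.card H / orderOf h) =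
    Nat.card (Quot fun f g : H → S => ∃ h : H, ∀ x : H, f (h⁻¹ * x) = g x) * Nat.card H := by
  classical
  letI : MulAction H (H → S) := arrowAction
  have := Fintype.ofFinite S
  have := Fintype.ofFinite (Quotient (MulAction.orbitRel H (H → S)))
  have b := MulAction.sum_card_fixedBy_eq_card_orbits_mul_card_group H (H → S)
  have e : Nat.card (Quot fun f g : H → S => ∃ h : H, ∀ x : H, f (h⁻¹ * x) = g x) =
      Nat.card (Quotient (MulAction.orbitRel H (H → S))) := by
    refine Nat.card_congr (Quot.congrRight ?_)
    intro f g
    change _ ↔ f ∈ MulAction.orbit H g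
    rw [MulAction.mem_orbit_symm]
    constructor
    · rintro ⟨h, hh⟩
      exact ⟨h, funext hh⟩
    · rintro ⟨h, hh⟩
      exact ⟨h, fun x => congrFun hh x⟩
  simp only [← Nat.card_eq_fintype_card] at b
  rw [e, ← b]
  refine Finset.sum_congr rfl fun h _ => ?_
  rw [← fixed_aux h]
  refine Nat.card_congr (Equiv.subtypeEquivRight fun f => ?_)
  rw [MulAction.mem_fixedBy]
  exact ⟨fun hh => funext hh, fun hh x => congrFun hh x⟩

theorem cyc_aux {H : Type*} [Group H] [IsCyclic H] [Fintype H] (F : ℕ → ℕ) :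
    ∑ h : H, F (orderOf h) = ∑ d ∈ (Nat.card H).divisors, Nat.totient d * F d := by
  classical
  rw [← Finset.sum_fiberwise_of_maps_to (s := Finset.univ) (t := (Nat.card H).divisors)
    (g := fun h : H => orderOf h)]
  · refine Finset.sum_congr rfl fun d hd => ?_
    rw [Finset.sum_congr rfl (g := fun _ => F d) (by
      intro x hx
      rw [(Finset.mem_filter.mp hx).2]), Finset.sum_const, smul_eq_mul]
    congr 1
    apply IsCyclic.card_orderOf_eq_totient
    have := Nat.dvd_of_mem_divisors hd
    simpa [Nat.card_eq_fintype_card] using this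
  · intro h _
    simp [orderOf_dvd_card, Nat.mem_divisors]

/-- Let `p` be a prime, `r, k ≥ 1`, `H` a cyclic group of order `p^r` and `S` a finite set with
`p^k` elements.  Let `H` act on the functions `f : H → S` by translation of the domain,
`(h • f) x = f (h⁻¹ x)`.  Then the number of orbits of this action equals
`p^k + Σ_{i=0}^{r−1} (p^{k·p^{r−i} − r + i} − p^{k·p^{r−i−1} − r + i})`. -/
theorem statement10 (p r k : ℕ) (hp : p.Prime) (hr : 1 ≤ r) (hk : 1 ≤ k)
    (H : Type*) [Group H] [IsCyclic H] (hH : Nat.card H = p ^ r)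
    (S : Type*) (hS : Nat.card S = p ^ k) :
    Nat.card (Quot fun f g : H → S => ∃ h : H, ∀ x : H, f (h⁻¹ * x) = g x) =
      p ^ k + ∑ i ∈ Finset.range r,
        (p ^ (k * p ^ (r - i) + i - r) - p ^ (k * p ^ (r - i - 1) + i - r)) := by
  have hp0 : ∀ n, 0 < p ^ n := fun n => pow_pos hp.pos n
  have : Finite H := Nat.finite_of_card_ne_zero (by rw [hH]; exact (hp0 _).ne')
  have : Finite S := Nat.finite_of_card_ne_zero (by rw [hS]; exact (hp0 _).ne')
  have := Fintype.ofFinite H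
  have b := burnside_aux (H := H) (S := S)
  rw [cyc_aux (fun d => Nat.card S ^ (Nat.card H / d)), hH, hS,
    Nat.sum_divisors_prime_pow hp] at b
  apply Nat.eq_of_mul_eq_mul_right (hp0 r)
  rw [← b]
  have ab := abel_aux p hp (fun i => (p : ℤ) ^ (k * p ^ (r - i))) r
  zify
  rw [Finset.sum_congr rfl (g := fun j =>
    (Nat.totient (p ^ j) : ℤ) * (p : ℤ) ^ (k * p ^ (r - j)))]
  · rw [← ab, add_mul, Finset.sum_mul, add_comm]
    congr 1
    · simp; ring
    · refine Finset.sum_congr rfl fun i hi => ?_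
      have hi := Finset.mem_range.mp hi
      obtain ⟨m, rfl⟩ : ∃ m, r = i + m + 1 := ⟨r - i - 1, by omega⟩
      have e1 : i + m + 1 - i = m + 1 := by omega
      have e2 : i + m + 1 - (i + 1) = m := by omega
      have l1 := le_aux p k m hp hk
      have l2 : k * p ^ m ≤ k * p ^ (m + 1) :=
        Nat.mul_le_mul_left _ (Nat.pow_le_pow_right hp.pos (by omega))
      simp only [e1, e2, Nat.add_sub_cancel]
      rw [Nat.cast_sub (Nat.pow_le_pow_right hp.pos (by omega))]
      push_cast
      rw [mul_sub, sub_mul, ← pow_add, ← pow_add, ← pow_add, ← pow_add]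
      congr 2 <;> omega
  · intro j hj
    have hj := Finset.mem_range.mp hj
    rw [Nat.pow_div (by omega) hp.pos, ← pow_mul]
end

section
/- Suppose m = p^r for a prime p and r ≥ 1. Then there is a unique natural number k with n = (p−1)·p^{r−1}·k. For 1 ≤ j ≤ r let G_j denote the unique subgroup of the cyclic group G of order p^j. Then the set ℳ(G_j) is finite and |ℳ(G_j)| = p^{k·p^{r−j} − r + j} − p^{k·p^{r−j−1} − r + j} for 1 ≤ j ≤ r−1, and |ℳ(G_r)| = p^k. -/
/-- A subgroup `M` of `Γ` is a maximal finite subgroup: it is finite, and every finite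
subgroup of `Γ` containing it equals it. -/
def IsMaxFin (Γ : Type*) [Group Γ] (M : Subgroup Γ) : Prop :=
  (M : Set Γ).Finite ∧ ∀ K : Subgroup Γ, (K : Set Γ).Finite → M ≤ K → M = K

/-- The set `𝒞(C)` of `Γ`-conjugacy classes of subgroups `H ⊆ Γ` with `π(H) = C`,
where `π : Γ → Γ/L` is the quotient map. -/
def ConjClassesOver (Γ : Type*) [Group Γ] (L : Subgroup Γ) [L.Normal]
    (C : Subgroup (Γ ⧸ L)) : Type _ :=
  Quot fun H K : {H : Subgroup Γ // Subgroup.map (QuotientGroup.mk' L) H = C} =>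
    SubConj Γ H.1 K.1

/-- The set `ℳ(C) ⊆ 𝒞(C)` of `Γ`-conjugacy classes of maximal finite subgroups `M ⊆ Γ`
with `π(M) = C`. -/
def MaxFinClassesOver (Γ : Type*) [Group Γ] (L : Subgroup Γ) [L.Normal]
    (C : Subgroup (Γ ⧸ L)) : Type _ :=
  Quot fun H K : {H : Subgroup Γ //
      Subgroup.map (QuotientGroup.mk' L) H = C ∧ IsMaxFin Γ H} =>
    SubConj Γ H.1 K.1

section
open Polynomial

lemma charpoly_dvd_aux {n : ℕ} (M : Matrix (Fin n) (Fin n) ℤ) (f : ℤ[X]) (hf : aeval M f = 0) :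
    M.charpoly ∣ f ^ n := by
  have h1 : (X - C X : ℤ[X][X]) ∣ f.map C - C ((f.map C).eval X) := X_sub_C_dvd_sub_C_eval
  let N : Matrix (Fin n) (Fin n) ℤ[X] := M.map C
  have h2 := map_dvd (aeval N : ℤ[X][X] →ₐ[ℤ[X]] _) h1
  have e1 : aeval N (f.map C) = 0 := by
    have : aeval N (f.map C) = (C : ℤ →+* ℤ[X]).mapMatrix (aeval M f) := by
      rw [aeval_def, eval₂_map, aeval_def, hom_eval₂]
      congr 1
      ext x
      simp
    rw [this, hf, map_zero]
  have e2 : (f.map C).eval X = f := by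
    rw [eval_map, eval₂_C_X]
  rw [map_sub, map_sub, e1, e2, aeval_X, aeval_C, aeval_C] at h2
  obtain ⟨B, hB⟩ := h2
  have hc : M.charpoly = (algebraMap ℤ[X] (Matrix (Fin n) (Fin n) ℤ[X]) X - N).det := rfl
  have h3 : algebraMap ℤ[X] (Matrix (Fin n) (Fin n) ℤ[X]) f =
      (algebraMap ℤ[X] (Matrix (Fin n) (Fin n) ℤ[X]) X - N) * B := by
    have := congrArg Neg.neg hB
    rw [← neg_mul, neg_sub, neg_sub, sub_zero] at this
    exact this
  refine ⟨B.det, ?_⟩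
  rw [hc, ← Matrix.det_mul, ← h3]
  rw [Algebra.algebraMap_eq_smul_one, Matrix.det_smul]
  simp

lemma card_aux {n : ℕ} (p q : ℕ) (hp : p.Prime)
    (S : (Fin n → ℤ) →ₗ[ℤ] (Fin n → ℤ)) (hS : aeval S (cyclotomic (p ^ (q+1)) ℤ) = 0)
    (hinj : ∀ x, S x = x → x = 0) :
    ∃ k, n = (p - 1) * p ^ q * k ∧
      Nat.card ((Fin n → ℤ) ⧸ LinearMap.range (1 - S)) = p ^ k := by
  have := Fact.mk hp
  set M := LinearMap.toMatrix' S with hM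
  have hpos : 0 < p ^ (q+1) := pow_pos hp.pos _
  have h0 : aeval M (cyclotomic (p ^ (q+1)) ℤ) = 0 := by
    have : M = LinearMap.toMatrixAlgEquiv' S := rfl
    rw [this, aeval_algHom_apply, hS, map_zero]
  have hd := charpoly_dvd_aux M _ h0
  have hpr : Prime (cyclotomic (p ^ (q+1)) ℤ) := (cyclotomic.irreducible hpos).prime
  obtain ⟨k, hk, hass⟩ := (dvd_prime_pow hpr _).1 hd
  have heq := eq_of_monic_of_associated M.charpoly_monic ((cyclotomic.monic _ ℤ).pow k) hass
  refine ⟨k, ?_, ?_⟩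
  · have := congrArg natDegree heq
    rw [Matrix.charpoly_natDegree_eq_dim, (cyclotomic.monic _ ℤ).natDegree_pow,
      natDegree_cyclotomic, Nat.totient_prime_pow_succ hp, Fintype.card_fin] at this
    rw [this]; ring
  · have hdet : LinearMap.det (1 - S) = (p : ℤ) ^ k := by
      have h := congrArg (eval 1) heq
      rw [eval_pow, eval_one_cyclotomic_prime_pow, Matrix.eval_charpoly] at h
      rw [← h, ← LinearMap.det_toMatrix']
      simp [hM]
    have hinj' : Function.Injective (1 - S : (Fin n → ℤ) →ₗ[ℤ] (Fin n → ℤ)) := by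
      rw [injective_iff_map_eq_zero]
      intro x hx
      apply hinj x
      rw [LinearMap.sub_apply, sub_eq_zero] at hx
      exact hx.symm
    have h5 := Submodule.natAbs_det_equiv _ (LinearEquiv.ofInjective _ hinj')
    rw [← h5]
    have : ((LinearMap.range (1 - S)).subtype ∘ₗ AddMonoidHom.toIntLinearMap
      ((LinearEquiv.ofInjective _ hinj' : _ ≃ₗ[ℤ] _) : (Fin n → ℤ) →+ _)) = 1 - S := by
      ext x; rfl
    erw [this, hdet]
    simp [Int.natAbs_pow]

lemma cyclo_aux {n : ℕ} (p q : ℕ) (hp : p.Prime)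
    (S : (Fin n → ℤ) →ₗ[ℤ] (Fin n → ℤ)) (h1 : S ^ (p ^ (q + 1)) = 1)
    (h2 : ∀ x, (S ^ (p ^ q)) x = x → x = 0) :
    aeval S (cyclotomic (p ^ (q+1)) ℤ) = 0 := by
  rw [cyclotomic_prime_pow_eq_geom_sum hp]
  simp only [map_sum, map_pow, aeval_X]
  have h3 := mul_neg_geom_sum (S ^ p ^ q) p
  rw [← pow_mul, ← pow_succ, h1, sub_self] at h3
  refine LinearMap.ext fun x => h2 _ ?_
  have := LinearMap.congr_fun h3 x
  rw [Module.End.mul_apply, LinearMap.sub_apply, LinearMap.zero_apply, sub_eq_zero] at this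
  exact this.symm

lemma modeq_aux {p r d i : ℕ} (hp : p.Prime) (hd : d < r) (hi : ¬ p ^ (d+1) ∣ i) :
    ∃ u, i * u ≡ p ^ d [MOD p ^ r] := by
  obtain ⟨e, he, hg⟩ := (Nat.dvd_prime_pow hp).1 (Nat.gcd_dvd_right i (p^r))
  have hed : e ≤ d := by
    by_contra h
    exact hi ((pow_dvd_pow p (by omega)).trans (hg ▸ Nat.gcd_dvd_left i (p^r)))
  have hlt : Nat.gcd i (p^r) < p^r := by
    rw [hg]; exact Nat.pow_lt_pow_right hp.one_lt (by omega)
  obtain ⟨u, -, hu⟩ := Nat.exists_mul_mod_eq_gcd hlt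
  refine ⟨u * p ^ (d - e), ?_⟩
  have : i * u ≡ p ^ e [MOD p ^ r] := by
    rw [← hg]
    unfold Nat.ModEq
    rw [hu, Nat.mod_eq_of_lt hlt]
  have := this.mul_right (p ^ (d-e))
  rwa [← pow_add, Nat.add_sub_cancel' hed, mul_assoc] at this

end

structure Dat (Γ : Type*) [Group Γ] (L : Subgroup Γ) [L.Normal] (n p r : ℕ) where
  ι : (Fin n → ℤ) → Γ
  t : Γ
  T : (Fin n → ℤ) →ₗ[ℤ] (Fin n → ℤ)
  hp : p.Prime
  hr : 1 ≤ r
  add : ∀ x y, ι (x + y) = ι x * ι y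
  inj : Function.Injective ι
  mem : ∀ γ, γ ∈ L ↔ ∃ x, ι x = γ
  comm : ∀ x, t * ι x = ι (T x) * t
  gen : ∀ γ, ∃ x, ∃ i : ℕ, γ = ι x * t ^ i
  ord : orderOf (t : Γ ⧸ L) = p ^ r
  free : ∀ γ : Γ, γ ∉ L → ∀ x : Γ, x ∈ L → x ≠ 1 → γ * x * γ⁻¹ ≠ x

namespace Dat
variable {Γ : Type*} [Group Γ] {L : Subgroup Γ} [L.Normal] {n p r : ℕ}

lemma ι_zero (D : Dat Γ L n p r) : D.ι 0 = 1 := by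
  have := D.add 0 0
  rw [add_zero] at this
  exact left_eq_mul.1 this

lemma ι_pow (D : Dat Γ L n p r) (x : Fin n → ℤ) (m : ℕ) : D.ι x ^ m = D.ι (m • x) := by
  induction m with
  | zero => simp [ι_zero]
  | succ m ih => rw [pow_succ, ih, ← D.add, succ_nsmul]

lemma comm_pow (D : Dat Γ L n p r) (i : ℕ) (x) : D.t ^ i * D.ι x = D.ι ((D.T ^ i) x) * D.t ^ i := by
  induction i with
  | zero => simp
  | succ i ih =>
    rw [pow_succ', mul_assoc, ih, ← mul_assoc, D.comm, mul_assoc, pow_succ', Module.End.mul_apply]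

lemma mul_form (D : Dat Γ L n p r) (x y a b) : (D.ι x * D.t ^ a) * (D.ι y * D.t ^ b) =
    D.ι (x + (D.T ^ a) y) * D.t ^ (a + b) := by
  rw [mul_assoc, ← mul_assoc (D.t ^ a), D.comm_pow, D.add, pow_add]
  group

lemma pow_form (D : Dat Γ L n p r) (x a b) : (D.ι x * D.t ^ a) ^ b =
    D.ι ((∑ i ∈ Finset.range b, (D.T ^ a) ^ i) x) * D.t ^ (a * b) := by
  induction b with
  | zero => simp [ι_zero]
  | succ b ih =>
    rw [pow_succ, ih, D.mul_form, Finset.sum_range_succ, LinearMap.add_apply, pow_mul, mul_add,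
      mul_one]

lemma mk_ι (D : Dat Γ L n p r) (x) : (D.ι x : Γ ⧸ L) = 1 :=
  (QuotientGroup.eq_one_iff _).2 ((D.mem _).2 ⟨x, rfl⟩)

lemma mk_form (D : Dat Γ L n p r) (x a) : ((D.ι x * D.t ^ a : Γ) : Γ ⧸ L) = (D.t : Γ ⧸ L) ^ a := by
  rw [QuotientGroup.mk_mul, D.mk_ι, one_mul, QuotientGroup.mk_pow]

lemma form_mem (D : Dat Γ L n p r) (x a) : D.ι x * D.t ^ a ∈ L ↔ p ^ r ∣ a := by
  rw [← QuotientGroup.eq_one_iff, D.mk_form, ← orderOf_dvd_iff_pow_eq_one, D.ord]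

lemma t_pow_card (D : Dat Γ L n p r) : D.t ^ (p ^ r) = 1 := by
  by_contra h
  have ht : D.t ∉ L := by
    have := D.form_mem 0 1
    rw [D.ι_zero, one_mul, pow_one] at this
    rw [this, Nat.dvd_one]
    exact (Nat.one_lt_pow (by have := D.hr; omega) D.hp.one_lt).ne'
  have h2 : D.t ^ (p^r) ∈ L := by
    have := D.form_mem 0 (p^r)
    rw [D.ι_zero, one_mul] at this
    exact this.2 dvd_rfl
  apply D.free _ ht _ h2 h
  rw [← pow_succ', pow_succ, mul_inv_cancel_right]

lemma T_pow_card (D : Dat Γ L n p r) : D.T ^ (p ^ r) = 1 := by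
  refine LinearMap.ext fun x => D.inj ?_
  have := D.comm_pow (p^r) x
  rw [D.t_pow_card] at this
  simpa using this.symm

lemma T_fix (D : Dat Γ L n p r) {i : ℕ} (hi : ¬ p ^ r ∣ i) {x} (h : (D.T ^ i) x = x) : x = 0 := by
  by_contra hx
  have h1 : D.t ^ i ∉ L := by
    have := D.form_mem 0 i
    rw [D.ι_zero, one_mul] at this
    rwa [this]
  apply D.free _ h1 (D.ι x) ((D.mem _).2 ⟨x, rfl⟩)
  · intro h2
    exact hx (D.inj (h2.trans D.ι_zero.symm))
  · rw [D.comm_pow, h, mul_inv_cancel_right]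

lemma fin_unique (D : Dat Γ L n p r) {K : Subgroup Γ} (hK : (K : Set Γ).Finite) {a b : Γ} (ha : a ∈ K) (hb : b ∈ K)
    (h : (a : Γ ⧸ L) = b) : a = b := by
  have h1 : a⁻¹ * b ∈ L := QuotientGroup.eq.1 h
  have h2 : a⁻¹ * b ∈ K := K.mul_mem (K.inv_mem ha) hb
  obtain ⟨x, hx⟩ := (D.mem _).1 h1
  have : Finite K := hK
  have h3 : IsOfFinOrder (a⁻¹ * b) := by
    have := isOfFinOrder_of_finite (⟨a⁻¹ * b, h2⟩ : K)
    exact (Submonoid.isOfFinOrder_coe (H := K.toSubmonoid) (x := ⟨a⁻¹ * b, h2⟩)).2 this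
  obtain ⟨m, hm, h4⟩ := isOfFinOrder_iff_pow_eq_one.1 h3
  rw [← hx, D.ι_pow, ← D.ι_zero] at h4
  have h5 := D.inj h4
  have h6 : x = 0 := (smul_eq_zero.1 h5).resolve_left (by omega)
  rw [h6, D.ι_zero] at hx
  exact inv_mul_eq_one.1 hx.symm

def sub (D : Dat Γ L n p r) (a : ℕ) (x : Fin n → ℤ) : Subgroup Γ := Subgroup.zpowers (D.ι x * D.t ^ a)

lemma form_pow_card (D : Dat Γ L n p r) {a : ℕ} (ha : ¬ p ^ r ∣ a) (x) : (D.ι x * D.t ^ a) ^ (p ^ r) = 1 := by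
  by_contra h
  have h1 := (D.form_mem x a).not.2 ha
  apply D.free _ h1 _ _ h
  · rw [← pow_succ', pow_succ, mul_inv_cancel_right]
  · rw [D.pow_form, D.form_mem]
    exact dvd_mul_left _ _

lemma sub_finite (D : Dat Γ L n p r) {a : ℕ} (ha : ¬ p ^ r ∣ a) (x) : (D.sub a x : Set Γ).Finite := by
  have : IsOfFinOrder (D.ι x * D.t ^ a) :=
    isOfFinOrder_iff_pow_eq_one.2 ⟨p ^ r, pow_pos D.hp.pos _, D.form_pow_card ha x⟩
  exact this.finite_zpowers

lemma self_mem (D : Dat Γ L n p r) (a x) : D.ι x * D.t ^ a ∈ D.sub a x := Subgroup.mem_zpowers _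

lemma sub_map (D : Dat Γ L n p r) (a x) : Subgroup.map (QuotientGroup.mk' L) (D.sub a x) =
    Subgroup.zpowers ((D.t : Γ ⧸ L) ^ a) := by
  rw [sub, MonoidHom.map_zpowers, QuotientGroup.mk'_apply, D.mk_form]

lemma exists_sub (D : Dat Γ L n p r) {a : ℕ} {K : Subgroup Γ} (hK : (K : Set Γ).Finite)
    (h : Subgroup.map (QuotientGroup.mk' L) K = Subgroup.zpowers ((D.t : Γ ⧸ L) ^ a)) :
    ∃ x, K = D.sub a x := by
  have h1 : (D.t : Γ ⧸ L) ^ a ∈ Subgroup.map (QuotientGroup.mk' L) K := by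
    rw [h]; exact Subgroup.mem_zpowers _
  obtain ⟨h0, h0K, h2⟩ := h1
  rw [QuotientGroup.mk'_apply] at h2
  have h3 : (D.t ^ a)⁻¹ * h0 ∈ L := by
    apply QuotientGroup.eq.1
    rw [h2, QuotientGroup.mk_pow]
  have h3' : h0 * (D.t ^ a)⁻¹ ∈ L := by
    have := Subgroup.Normal.conj_mem inferInstance _ h3 (D.t ^ a)
    simpa [mul_assoc] using this
  obtain ⟨x, hx⟩ := (D.mem _).1 h3'
  have hx' : h0 = D.ι x * D.t ^ a := by rw [hx]; group
  refine ⟨x, le_antisymm ?_ ?_⟩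
  · intro κ hκ
    have : (κ : Γ ⧸ L) ∈ Subgroup.zpowers ((D.t : Γ ⧸ L) ^ a) := by
      rw [← h]; exact ⟨κ, hκ, rfl⟩
    obtain ⟨i, hi⟩ := Subgroup.mem_zpowers_iff.1 this
    have : κ = h0 ^ i := D.fin_unique hK hκ (K.zpow_mem h0K i) (by
      rw [QuotientGroup.mk_zpow, h2, hi])
    rw [this, hx']
    exact Subgroup.zpow_mem _ (D.self_mem a x) i
  · rw [sub, Subgroup.zpowers_le, ← hx']
    exact h0K

lemma conj_form (D : Dat Γ L n p r) (z i y a) : (D.ι z * D.t ^ i) * (D.ι y * D.t ^ a) * (D.ι z * D.t ^ i)⁻¹ =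
    D.ι (z + (D.T ^ i) y - (D.T ^ a) z) * D.t ^ a := by
  rw [mul_inv_eq_iff_eq_mul, D.mul_form, D.mul_form, sub_add_cancel, add_comm i a]

lemma mk_comm (D : Dat Γ L n p r) (a b : Γ) : (a : Γ ⧸ L) * b = b * a := by
  obtain ⟨x, i, rfl⟩ := D.gen a
  obtain ⟨y, j, rfl⟩ := D.gen b
  rw [D.mk_form, D.mk_form, ← pow_add, ← pow_add, add_comm]

lemma subConj_iff (D : Dat Γ L n p r) {a : ℕ} (ha : ¬ p ^ r ∣ a) (x y) : SubConj Γ (D.sub a y) (D.sub a x) ↔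
    ∃ z i, x = z + (D.T ^ i) y - (D.T ^ a) z := by
  have key : ∀ z i, D.sub a x = Subgroup.map (MulAut.conj (D.ι z * D.t ^ i)).toMonoidHom (D.sub a y)
      ↔ x = z + (D.T ^ i) y - (D.T ^ a) z := by
    intro z i
    have hm : Subgroup.map (MulAut.conj (D.ι z * D.t ^ i)).toMonoidHom (D.sub a y) =
        D.sub a (z + (D.T ^ i) y - (D.T ^ a) z) := by
      rw [sub, MonoidHom.map_zpowers, sub, ← D.conj_form]
      rfl
    rw [hm]
    constructor
    · intro h
      have h1 := D.self_mem a (z + (D.T ^ i) y - (D.T ^ a) z)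
      rw [← h] at h1
      have := D.fin_unique (D.sub_finite ha x) (D.self_mem a x) h1 (by rw [D.mk_form, D.mk_form])
      exact D.inj (mul_right_cancel this)
    · rintro h; rw [← h]
  constructor
  · rintro ⟨γ, h⟩
    obtain ⟨z, i, rfl⟩ := D.gen γ
    exact ⟨z, i, (key z i).1 h⟩
  · rintro ⟨z, i, h⟩
    exact ⟨_, (key z i).2 h⟩

/-- norm operator -/
noncomputable def Nop (D : Dat Γ L n p r) (d : ℕ) : (Fin n → ℤ) →ₗ[ℤ] (Fin n → ℤ) := ∑ i ∈ Finset.range p, (D.T ^ (p ^ d)) ^ i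

def P (D : Dat Γ L n p r) (c : ℕ) (x : Fin n → ℤ) : Prop := ∀ d, c = d + 1 → ∀ y, x ≠ D.Nop d y

lemma not_dvd (D : Dat Γ L n p r) {c : ℕ} (hc : c < r) : ¬ p ^ r ∣ p ^ c := by
  rw [Nat.pow_dvd_pow_iff_le_right D.hp.one_lt]
  omega

lemma isMaxFin_iff (D : Dat Γ L n p r) {c : ℕ} (hc : c < r) (x) : IsMaxFin Γ (D.sub (p ^ c) x) ↔ D.P c x := by
  constructor
  · rintro ⟨-, h⟩ d rfl y rfl
    have h1 := h (D.sub (p ^ d) y) (D.sub_finite (D.not_dvd (by omega)) y) (by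
      rw [sub, Subgroup.zpowers_le]
      have := (D.sub (p ^ d) y).pow_mem (D.self_mem _ y) p
      rw [D.pow_form, ← pow_succ] at this
      exact this)
    have h2 := congrArg (Subgroup.map (QuotientGroup.mk' L)) h1
    rw [D.sub_map, D.sub_map] at h2
    have h3 := congrArg (fun H : Subgroup (Γ ⧸ L) => Nat.card H) h2
    have hpos := D.hp.pos
    simp only [Nat.card_zpowers] at h3
    rw [orderOf_pow_of_dvd (pow_pos hpos _).ne' (by rw [D.ord]; exact pow_dvd_pow p (by omega)),
      orderOf_pow_of_dvd (pow_pos hpos _).ne' (by rw [D.ord]; exact pow_dvd_pow p (by omega)), D.ord,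
      Nat.pow_div (by omega) hpos, Nat.pow_div (by omega) hpos] at h3
    have := Nat.pow_right_injective D.hp.two_le h3
    omega
  · intro hP
    refine ⟨D.sub_finite (D.not_dvd hc) x, fun K hK hle => le_antisymm hle ?_⟩
    intro κ hκ
    obtain ⟨y, i, rfl⟩ := D.gen κ
    have hx : D.ι x * D.t ^ p ^ c ∈ K := hle (D.self_mem _ x)
    by_cases hdi : p ^ c ∣ i
    · obtain ⟨e, rfl⟩ := hdi
      have := D.fin_unique hK hκ (K.pow_mem hx e) (by
        rw [D.mk_form, QuotientGroup.mk_pow, D.mk_form, pow_mul])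
      rw [this]
      exact Subgroup.pow_mem _ (D.self_mem _ x) e
    · exfalso
      cases c with
      | zero => simp at hdi
      | succ d =>
        obtain ⟨u, hu⟩ := modeq_aux D.hp (by omega : d < r) hdi
        obtain ⟨y', hy'⟩ : ∃ y', (D.ι y * D.t ^ i) ^ u = D.ι y' * D.t ^ (p ^ d) := by
          rw [D.pow_form y i u, pow_eq_pow_of_modEq hu D.t_pow_card]
          exact ⟨_, rfl⟩
        have h1 : D.ι y' * D.t ^ (p ^ d) ∈ K := hy' ▸ K.pow_mem hκ u
        have h2 := K.pow_mem h1 p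
        rw [D.pow_form, ← pow_succ] at h2
        have h3 := D.fin_unique hK hx h2 (by rw [D.mk_form, D.mk_form])
        exact hP d rfl y' (D.inj (mul_right_cancel h3))

lemma T_comm (D : Dat Γ L n p r) (a b : ℕ) (x) : (D.T ^ a) ((D.T ^ b) x) = (D.T ^ b) ((D.T ^ a) x) := by
  rw [← Module.End.mul_apply, ← Module.End.mul_apply, ← pow_add, ← pow_add, add_comm]

lemma T_add (D : Dat Γ L n p r) (a b : ℕ) (x) : (D.T ^ a) ((D.T ^ b) x) = (D.T ^ (a + b)) x := by
  rw [← Module.End.mul_apply, ← pow_add]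

lemma T_inv (D : Dat Γ L n p r) (i : ℕ) (x) : (D.T ^ ((p ^ r - 1) * i)) ((D.T ^ i) x) = x := by
  have hpos : 0 < p ^ r := pow_pos D.hp.pos _
  have : (p ^ r - 1) * i + i = p ^ r * i := by
    rw [← Nat.succ_mul]; congr 1; omega
  rw [D.T_add, this, pow_mul, D.T_pow_card, one_pow]
  rfl

lemma Nop_comm (D : Dat Γ L n p r) (d i : ℕ) (x) :
    (D.T ^ i) (D.Nop d x) = D.Nop d ((D.T ^ i) x) := by
  have : Commute (D.T ^ i) (D.Nop d) := by
    unfold Nop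
    apply Commute.sum_right
    intro j _
    rw [← pow_mul]
    exact Commute.pow_pow_self _ _ _
  exact LinearMap.congr_fun this.eq x

lemma Nop_sub (D : Dat Γ L n p r) (d : ℕ) (x) :
    D.Nop d (x - (D.T ^ p ^ d) x) = x - (D.T ^ p ^ (d+1)) x := by
  have h := geom_sum_mul_neg (D.T ^ p ^ d) p
  rw [← pow_mul, ← pow_succ] at h
  exact LinearMap.congr_fun h x

lemma sub_Nop (D : Dat Γ L n p r) (d : ℕ) (x) :
    D.Nop d x - (D.T ^ p ^ d) (D.Nop d x) = x - (D.T ^ p ^ (d+1)) x := by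
  rw [D.Nop_comm, ← map_sub, D.Nop_sub]

lemma P_shift (D : Dat Γ L n p r) {c : ℕ} {x} (h : D.P c x) (z i) :
    D.P c (z + (D.T ^ i) x - (D.T ^ p ^ c) z) := by
  rintro d rfl y hy
  have h1 : (D.T ^ i) x = D.Nop d (y - (z - (D.T ^ p ^ d) z)) := by
    rw [map_sub, D.Nop_sub, ← hy]
    abel
  apply h d rfl ((D.T ^ ((p ^ r - 1) * i)) (y - (z - (D.T ^ p ^ d) z)))
  rw [← D.Nop_comm, ← h1, D.T_inv]

/-- the finite quotient -/
abbrev W (D : Dat Γ L n p r) (c : ℕ) := (Fin n → ℤ) ⧸ LinearMap.range (1 - D.T ^ p ^ c)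

abbrev mkW (D : Dat Γ L n p r) (c : ℕ) (x : Fin n → ℤ) : D.W c := Submodule.Quotient.mk x

lemma mkW_eq (D : Dat Γ L n p r) {c : ℕ} {x y} :
    D.mkW c x = D.mkW c y ↔ ∃ z, x = z + y - (D.T ^ p ^ c) z := by
  rw [Submodule.Quotient.eq, LinearMap.mem_range]
  refine exists_congr fun z => ?_
  rw [LinearMap.sub_apply, Module.End.one_apply]
  constructor
  · intro h
    rw [add_sub_right_comm, h, sub_add_cancel]
  · rintro rfl; abel

lemma mkW_T (D : Dat Γ L n p r) {c : ℕ} (i : ℕ) {x y} (h : D.mkW c x = D.mkW c y) :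
    D.mkW c ((D.T ^ i) x) = D.mkW c ((D.T ^ i) y) := by
  rw [mkW_eq] at h ⊢
  obtain ⟨z, rfl⟩ := h
  exact ⟨(D.T ^ i) z, by rw [map_sub, map_add, D.T_comm]⟩

lemma mkW_mod (D : Dat Γ L n p r) {c : ℕ} (i : ℕ) (x) :
    D.mkW c ((D.T ^ i) x) = D.mkW c ((D.T ^ (i % p ^ c)) x) := by
  have h1 : ∀ y, D.mkW c ((D.T ^ p ^ c) y) = D.mkW c y := by
    intro y
    rw [mkW_eq]
    exact ⟨-y, by rw [map_neg]; abel⟩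
  have h2 : ∀ e y, D.mkW c ((D.T ^ (p ^ c * e)) y) = D.mkW c y := by
    intro e y
    induction e with
    | zero => simp
    | succ e ih => rw [mul_add, mul_one, add_comm, ← D.T_add, h1, ih]
  conv_lhs => rw [← Nat.div_add_mod i (p ^ c), ← D.T_add]
  exact h2 _ _

lemma stab (D : Dat Γ L n p r) {c : ℕ} (hc : c < r) {x} (h : D.P c x) {i : ℕ}
    (hi : ¬ p ^ c ∣ i) : D.mkW c ((D.T ^ i) x) ≠ D.mkW c x := by
  intro he
  cases c with
  | zero => simp at hi
  | succ d =>
    obtain ⟨u, hu⟩ := modeq_aux D.hp (by omega : d < r) hi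
    have h2 : ∀ e, D.mkW (d+1) ((D.T ^ (i * e)) x) = D.mkW (d+1) x := by
      intro e
      induction e with
      | zero => simp
      | succ e ih =>
        rw [mul_add, mul_one, ← D.T_add, D.T_comm]
        exact (D.mkW_T i ih).trans he
    have h3 := h2 u
    rw [pow_eq_pow_of_modEq hu D.T_pow_card, mkW_eq] at h3
    obtain ⟨z, hz⟩ := h3
    apply h d rfl (-z)
    have h4 : (D.T ^ p ^ d) (x + D.Nop d z) = x + D.Nop d z := by
      have := D.sub_Nop d z
      rw [map_add, hz, ← sub_eq_zero]
      have h5 : z + x - (D.T ^ p ^ (d + 1)) z + (D.T ^ p ^ d) (D.Nop d z) - (x + D.Nop d z) =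
        (z - (D.T ^ p ^ (d + 1)) z) - (D.Nop d z - (D.T ^ p ^ d) (D.Nop d z)) := by abel
      rw [h5, this, sub_self]
    have h6 := D.T_fix (D.not_dvd (by omega)) h4
    rw [map_neg]
    exact eq_neg_of_add_eq_zero_left h6

lemma subConj_equiv (D : Dat Γ L n p r) (C : Subgroup (Γ ⧸ L)) :
    Equivalence fun H K : {H : Subgroup Γ //
      Subgroup.map (QuotientGroup.mk' L) H = C ∧ IsMaxFin Γ H} => SubConj Γ H.1 K.1 := by
  refine ⟨fun H => ⟨1, ?_⟩, ?_, ?_⟩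
  · ext; simp
  · rintro H K ⟨γ, h⟩
    refine ⟨γ⁻¹, ?_⟩
    rw [h, Subgroup.map_map]
    ext; simp [mul_assoc]
  · rintro H K M ⟨γ, h⟩ ⟨δ, h'⟩
    refine ⟨δ * γ, ?_⟩
    rw [h', h, Subgroup.map_map]
    congr 1
    ext; simp

lemma bij (D : Dat Γ L n p r) {c : ℕ} (hc : c < r) :
    Nonempty (MaxFinClassesOver Γ L (Subgroup.zpowers ((D.t : Γ ⧸ L) ^ p ^ c)) × Fin (p ^ c) ≃
      {w : D.W c | ∃ x, D.mkW c x = w ∧ D.P c x}) := by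
  have hnd := D.not_dvd hc
  let cl : ∀ x, D.P c x → MaxFinClassesOver Γ L (Subgroup.zpowers ((D.t : Γ ⧸ L) ^ p ^ c)) :=
    fun x hx => Quot.mk _ ⟨D.sub (p ^ c) x, D.sub_map _ x, (D.isMaxFin_iff hc x).2 hx⟩
  have hcl : ∀ x hx y hy, cl y hy = cl x hx ↔ ∃ z i, x = z + (D.T ^ i) y - (D.T ^ p ^ c) z := by
    intro x hx y hy
    rw [← D.subConj_iff hnd]
    exact (D.subConj_equiv _).quot_mk_eq_iff _ _
  have hrep : ∀ q, ∃ x, ∃ hx : D.P c x, cl x hx = q := by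
    intro q
    induction q using Quot.ind with
    | mk H =>
      obtain ⟨H, h1, h2⟩ := H
      obtain ⟨x, rfl⟩ := D.exists_sub h2.1 h1
      exact ⟨x, (D.isMaxFin_iff hc x).1 h2, rfl⟩
  choose f hf hfq using hrep
  have hP : ∀ {x} i, D.P c x → D.P c ((D.T ^ i) x) := by
    intro x i hx
    have := D.P_shift hx 0 i
    simpa using this
  refine ⟨Equiv.ofBijective (fun qi => ⟨D.mkW c ((D.T ^ (qi.2 : ℕ)) (f qi.1)), _, rfl, hP _ (hf _)⟩)
    ⟨?_, ?_⟩⟩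
  · rintro ⟨q, i⟩ ⟨q', i'⟩ h
    have h : D.mkW c ((D.T ^ (i : ℕ)) (f q)) = D.mkW c ((D.T ^ (i' : ℕ)) (f q')) :=
      congrArg Subtype.val h
    have hq : q = q' := by
      rw [← hfq q, ← hfq q', hcl _ (hf q') _ (hf q)]
      have h1 := D.mkW_T ((p ^ r - 1) * i') h
      rw [D.T_inv, D.T_add] at h1
      obtain ⟨z, hz⟩ := D.mkW_eq.1 h1.symm
      exact ⟨z, _, hz⟩
    subst hq
    have key : ∀ i i' : ℕ, i < i' → i' < p ^ c →
        D.mkW c ((D.T ^ i') (f q)) ≠ D.mkW c ((D.T ^ i) (f q)) := by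
      intro i i' hlt hlt' he
      have h1 := D.mkW_T ((p ^ r - 1) * i) he
      have : i' = i + (i' - i) := by omega
      rw [D.T_inv, this, ← D.T_add i, D.T_inv] at h1
      exact D.stab hc (hf q) (Nat.not_dvd_of_pos_of_lt (by omega) (by omega)) h1
    have : i = i' := by
      apply Fin.ext
      rcases lt_trichotomy (i : ℕ) i' with h' | h' | h'
      · exact absurd h.symm (key _ _ h' i'.2)
      · exact h'
      · exact absurd h (key _ _ h' i.2)
    rw [this]
  · rintro ⟨w, x, rfl, hx⟩
    obtain ⟨z, i, h⟩ := (hcl x hx _ (hf _)).1 (hfq (cl x hx))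
    refine ⟨(cl x hx, ⟨i % p ^ c, Nat.mod_lt _ (pow_pos D.hp.pos _)⟩), Subtype.ext ?_⟩
    change D.mkW c ((D.T ^ (i % p ^ c)) (f _)) = D.mkW c x
    rw [← D.mkW_mod, eq_comm, mkW_eq]
    exact ⟨z, h⟩

lemma card_compl (D : Dat Γ L n p r) {d : ℕ} (hd : d + 1 < r) [Finite (D.W (d+1))] :
    Nat.card {w : D.W (d+1) | ∃ x, D.mkW (d+1) x = w ∧ D.P (d+1) x} + Nat.card (D.W d) =
      Nat.card (D.W (d+1)) := by
  let g : D.W d →ₗ[ℤ] D.W (d+1) := Submodule.mapQ _ _ (D.Nop d) (by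
    rintro _ ⟨z, rfl⟩
    refine ⟨z, ?_⟩
    rw [LinearMap.sub_apply, LinearMap.sub_apply]
    exact (D.Nop_sub d z).symm)
  have hg : Function.Injective g := by
    rw [injective_iff_map_eq_zero]
    intro w
    induction w using Submodule.Quotient.induction_on with
    | H y =>
      intro h
      have h : D.mkW (d+1) (D.Nop d y) = D.mkW (d+1) 0 := h
      obtain ⟨z, hz⟩ := D.mkW_eq.1 h
      rw [add_zero, ← D.Nop_sub, ← sub_eq_zero, ← map_sub] at hz
      have h1 := D.sub_Nop d (y - (z - (D.T ^ p ^ d) z))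
      rw [hz, map_zero, sub_zero, eq_comm, sub_eq_zero] at h1
      have h2 := D.T_fix (D.not_dvd hd) h1.symm
      change D.mkW d y = D.mkW d 0
      rw [mkW_eq]
      exact ⟨z, by rw [add_zero]; exact sub_eq_zero.1 h2⟩
  have hcompl : {w : D.W (d+1) | ∃ x, D.mkW (d+1) x = w ∧ D.P (d+1) x}ᶜ = Set.range g := by
    ext w
    constructor
    · intro h
      induction w using Submodule.Quotient.induction_on with
      | H x =>
        by_contra h'
        apply h
        refine ⟨x, rfl, ?_⟩
        rintro d' hd' y rfl
        obtain rfl : d = d' := by omega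
        exact h' ⟨D.mkW d y, rfl⟩
    · rintro ⟨w, rfl⟩ ⟨x, h1, h2⟩
      induction w using Submodule.Quotient.induction_on with
      | H y =>
        have h1 : D.mkW (d+1) x = D.mkW (d+1) (D.Nop d y) := h1
        obtain ⟨z, hz⟩ := D.mkW_eq.1 h1.symm
        have := D.P_shift h2 z 0
        rw [pow_zero, Module.End.one_apply, ← hz] at this
        exact this d rfl y rfl
  have h1 := Set.ncard_add_ncard_compl {w : D.W (d+1) | ∃ x, D.mkW (d+1) x = w ∧ D.P (d+1) x}
  rw [hcompl] at h1
  rw [← h1, Nat.card_coe_set_eq, ← Nat.card_coe_set_eq (Set.range g),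
    Nat.card_congr (Equiv.ofInjective g hg)]

lemma card_W (D : Dat Γ L n p r) {c : ℕ} (hc : c < r) :
    ∃ k, n = (p - 1) * p ^ (r - c - 1) * k ∧ Nat.card (D.W c) = p ^ k := by
  refine card_aux p (r - c - 1) D.hp (D.T ^ p ^ c) ?_ ?_
  · apply cyclo_aux p _ D.hp
    · rw [← pow_mul, ← pow_add, show c + (r - c - 1 + 1) = r by omega, D.T_pow_card]
    · intro x h
      rw [← pow_mul, ← pow_add] at h
      exact D.T_fix (D.not_dvd (by omega)) h
  · intro x h
    exact D.T_fix (D.not_dvd hc) h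

lemma card_W' (D : Dat Γ L n p r) {c : ℕ} (hc : c < r) {k : ℕ} (hk : n = (p - 1) * p ^ (r - 1) * k) :
    Nat.card (D.W c) = p ^ (k * p ^ c) := by
  obtain ⟨k', h1, h2⟩ := D.card_W hc
  rw [h2]
  congr 1
  have h3 : 0 < (p - 1) * p ^ (r - c - 1) :=
    Nat.mul_pos (by have := D.hp.two_le; omega) (pow_pos D.hp.pos _)
  apply Nat.eq_of_mul_eq_mul_left h3
  rw [← h1, hk, show r - 1 = (r - c - 1) + c by omega, pow_add]
  ring

lemma main (D : Dat Γ L n p r) {c : ℕ} (hc : c < r) {k : ℕ} (hn : 1 ≤ n)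
    (hk : n = (p - 1) * p ^ (r - 1) * k) :
    Finite (MaxFinClassesOver Γ L (Subgroup.zpowers ((D.t : Γ ⧸ L) ^ p ^ c))) ∧
    (1 ≤ c → Nat.card (MaxFinClassesOver Γ L (Subgroup.zpowers ((D.t : Γ ⧸ L) ^ p ^ c))) =
      p ^ (k * p ^ c - c) - p ^ (k * p ^ (c - 1) - c)) ∧
    (c = 0 → Nat.card (MaxFinClassesOver Γ L (Subgroup.zpowers ((D.t : Γ ⧸ L) ^ p ^ c))) =
      p ^ k) := by
  obtain ⟨e⟩ := D.bij hc
  have hppos : ∀ i, 0 < p ^ i := fun i => pow_pos D.hp.pos i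
  have hW := D.card_W' hc hk
  have hfin : Finite (D.W c) := Nat.finite_of_card_ne_zero (by rw [hW]; exact (hppos _).ne')
  have hcard := Nat.card_congr e
  rw [Nat.card_prod, Nat.card_fin] at hcard
  have hk1 : 1 ≤ k := by
    rcases Nat.eq_zero_or_pos k with rfl | h
    · simp at hk; omega
    · exact h
  refine ⟨?_, ?_, ?_⟩
  · have h1 := Finite.of_equiv _ e.symm
    exact Finite.of_surjective (fun x : _ × Fin (p ^ c) => x.1)
      (fun q => ⟨(q, ⟨0, hppos c⟩), rfl⟩)
  · intro h1
    obtain ⟨d, rfl⟩ : ∃ d, c = d + 1 := ⟨c - 1, by omega⟩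
    have h2 := D.card_compl hc
    rw [← hcard, hW, D.card_W' (by omega) hk] at h2
    have hd : d + 1 ≤ p ^ d := Nat.lt_pow_self D.hp.one_lt
    have hd' : d + 1 ≤ k * p ^ d := hd.trans (Nat.le_mul_of_pos_left _ hk1)
    have hd'' : d + 1 ≤ k * p ^ (d + 1) :=
      hd'.trans (Nat.mul_le_mul_left _ (Nat.pow_le_pow_right D.hp.pos (by omega)))
    apply Nat.eq_of_mul_eq_mul_right (hppos (d+1))
    rw [Nat.sub_mul, ← pow_add, ← pow_add, Nat.sub_add_cancel hd'', Nat.add_sub_cancel,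
      Nat.sub_add_cancel hd']
    omega
  · rintro rfl
    have : {w : D.W 0 | ∃ x, D.mkW 0 x = w ∧ D.P 0 x} = Set.univ := by
      ext w
      simp only [Set.mem_ofPred_eq, Set.mem_univ, iff_true]
      induction w using Submodule.Quotient.induction_on with
      | H x => exact ⟨x, rfl, fun d h => by omega⟩
    rw [this, Nat.card_coe_set_eq, Set.ncard_univ, hW] at hcard
    simpa using hcard

end Dat

/-- Suppose `m = p^r` for a prime `p` and `r ≥ 1` in the setting of the paper (`L ≅ ℤⁿ` normal
in `Γ`, `G = Γ/L` cyclic of order `m`, conjugation action free outside the origin).  Then there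
is a unique natural number `k` with `n = (p−1)·p^{r−1}·k`, and for `1 ≤ j ≤ r` and `G_j ⊆ G` the
subgroup of order `p^j`, the set `ℳ(G_j)` is finite with
`|ℳ(G_j)| = p^{k·p^{r−j} − r + j} − p^{k·p^{r−j−1} − r + j}` for `j ≤ r−1` and
`|ℳ(G_r)| = p^k`. -/
theorem statement11 (n m p r j : ℕ) (hn : 1 ≤ n) (hp : p.Prime) (hr : 1 ≤ r) (hm : m = p ^ r)
    (hj1 : 1 ≤ j) (hjr : j ≤ r)
    (Γ : Type*) [Group Γ] (L : Subgroup Γ) [L.Normal]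
    (hL : Nonempty (L ≃* Multiplicative (Fin n → ℤ)))
    (hcyc : IsCyclic (Γ ⧸ L)) (hcard : Nat.card (Γ ⧸ L) = m)
    (hfree : ∀ γ : Γ, γ ∉ L → ∀ x : Γ, x ∈ L → x ≠ 1 → γ * x * γ⁻¹ ≠ x)
    (Gj : Subgroup (Γ ⧸ L)) (hGj : Nat.card Gj = p ^ j) :
    (∃! k : ℕ, n = (p - 1) * p ^ (r - 1) * k) ∧
    ∀ k : ℕ, n = (p - 1) * p ^ (r - 1) * k →
      Finite (MaxFinClassesOver Γ L Gj) ∧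
      (j ≤ r - 1 → Nat.card (MaxFinClassesOver Γ L Gj) =
        p ^ (k * p ^ (r - j) + j - r) - p ^ (k * p ^ (r - j - 1) + j - r)) ∧
      (j = r → Nat.card (MaxFinClassesOver Γ L Gj) = p ^ k) := by
  obtain ⟨e⟩ := hL
  obtain ⟨g, hg⟩ := hcyc.exists_generator
  obtain ⟨t, rfl⟩ := QuotientGroup.mk_surjective g
  have hord : orderOf (t : Γ ⧸ L) = p ^ r := by
    rw [orderOf_eq_card_of_forall_mem_zpowers hg, hcard, hm]
  have hfinq : Finite (Γ ⧸ L) :=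
    Nat.finite_of_card_ne_zero (by rw [hcard, hm]; exact (pow_pos hp.pos _).ne')
  let T0 : (Fin n → ℤ) →+ (Fin n → ℤ) :=
    { toFun := fun x => (e (MulAut.conjNormal t (e.symm (Multiplicative.ofAdd x)))).toAdd
      map_zero' := by simp
      map_add' := by intro x y; simp }
  let D : Dat Γ L n p r :=
    { ι := fun x => (e.symm (Multiplicative.ofAdd x) : Γ)
      t := t
      T := T0.toIntLinearMap
      hp := hp
      hr := hr
      add := by intro x y; simp
      inj := by
        intro x y h
        have h1 := e.symm.injective (Subtype.ext h)
        exact Multiplicative.ofAdd.injective h1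
      mem := by
        intro γ
        constructor
        · intro h
          exact ⟨(e ⟨γ, h⟩).toAdd, by simp⟩
        · rintro ⟨x, rfl⟩
          exact Subtype.property _
      comm := by
        intro x
        simp [T0, MulAut.conjNormal_apply]
      gen := by
        intro γ
        obtain ⟨i, hi⟩ := (mem_powers_iff_mem_zpowers).2 (hg (γ : Γ ⧸ L))
        have h1 : γ * (t ^ i)⁻¹ ∈ L := by
          rw [← QuotientGroup.eq_one_iff, QuotientGroup.mk_mul, QuotientGroup.mk_inv,
            QuotientGroup.mk_pow, mul_inv_eq_one]
          exact hi.symm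
        exact ⟨(e ⟨_, h1⟩).toAdd, i, by simp⟩
      ord := hord
      free := hfree }
  have hGj' : Gj = Subgroup.zpowers ((t : Γ ⧸ L) ^ p ^ (r - j)) := by
    apply Subgroup.eq_of_le_of_card_ge
    · intro u hu
      obtain ⟨i, rfl⟩ := (mem_powers_iff_mem_zpowers).2 (hg u)
      have h1 : ((t : Γ ⧸ L) ^ i) ^ (p ^ j) = 1 := by
        rw [← hGj]
        exact congrArg Subtype.val (pow_card_eq_one' (x := (⟨_, hu⟩ : Gj)))
      rw [← pow_mul, ← orderOf_dvd_iff_pow_eq_one, hord] at h1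
      have h2 : p ^ (r - j) ∣ i := by
        rw [show r = (r - j) + j by omega, pow_add] at h1
        exact Nat.dvd_of_mul_dvd_mul_right (pow_pos hp.pos _) h1
      obtain ⟨v, rfl⟩ := h2
      change (t : Γ ⧸ L) ^ (p ^ (r - j) * v) ∈ _
      rw [pow_mul]
      exact Subgroup.pow_mem _ (Subgroup.mem_zpowers _) v
    · rw [Nat.card_zpowers, hGj, orderOf_pow_of_dvd (pow_pos hp.pos _).ne'
        (by rw [hord]; exact pow_dvd_pow p (by omega)), hord, Nat.pow_div (by omega) hp.pos]
      exact Nat.pow_le_pow_right hp.pos (by omega)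
  have hpos : 0 < (p - 1) * p ^ (r - 1) :=
    Nat.mul_pos (by have := hp.two_le; omega) (pow_pos hp.pos _)
  refine ⟨?_, ?_⟩
  · obtain ⟨k, hk, -⟩ := D.card_W (c := 0) (by omega)
    refine ⟨k, hk, fun k' hk' => ?_⟩
    exact Nat.eq_of_mul_eq_mul_left hpos (hk'.symm.trans hk)
  · intro k hk
    have hmain := D.main (c := r - j) (by omega) hn hk
    rw [← (hGj' : Gj = Subgroup.zpowers ((D.t : Γ ⧸ L) ^ p ^ (r - j)))] at hmain
    refine ⟨hmain.1, fun h => ?_, fun h => hmain.2.2 (by omega)⟩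
    rw [hmain.2.1 (by omega)]
    have e1 : ∀ a, a + j - r = a - (r - j) := by intro a; omega
    rw [e1, e1]
end

section
/- The Euler totient φ(m) divides n. Equivalently, if m = p₁^{r₁} ⋯ p_s^{r_s} with distinct primes p_i, then there exists a natural number k with n = k · ∏_{i=1}^{s} (p_i − 1)·p_i^{r_i − 1}. -/
open Polynomial in
lemma finrank_dvd_aux {V : Type*} [AddCommGroup V] [Module ℚ V]
    (T : Module.End ℚ V) (f : ℚ[X]) (hf : Irreducible f) (hT : aeval T f = 0) :
    f.natDegree ∣ Module.finrank ℚ V := by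
  haveI : Fact (Irreducible f) := ⟨hf⟩
  let K := AdjoinRoot f
  let φ : K →ₐ[ℚ] Module.End ℚ V := Ideal.Quotient.liftₐ (Ideal.span {f}) (aeval T) (by
    intro a ha
    obtain ⟨b, rfl⟩ := Ideal.mem_span_singleton.1 ha
    simp [hT])
  letI : Module K V := Module.compHom V φ.toRingHom
  haveI : IsScalarTower ℚ K V := ⟨fun q k v => by
    change φ (q • k) v = q • (φ k v)
    simp⟩
  have h := Module.finrank_mul_finrank ℚ K V
  have h2 : Module.finrank ℚ K = f.natDegree := by
    rw [(AdjoinRoot.powerBasis hf.ne_zero).finrank, AdjoinRoot.powerBasis_dim]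
  rw [← h2, ← h]
  exact dvd_mul_right _ _

open Polynomial in
lemma cyclotomic_kills_aux {M : Type*} [AddCommGroup M] (A : Module.End ℤ M) (m : ℕ)
    (hm : 0 < m) (hA : A ^ m = 1)
    (hfree : ∀ d, 0 < d → d < m → ∀ x, x ≠ 0 → (A ^ d) x ≠ x) :
    aeval A (cyclotomic m ℤ) = 0 := by
  have hinj : ∀ d ∈ m.properDivisors, ∀ x, aeval A (cyclotomic d ℤ) x = 0 → x = 0 := by
    intro d hd x hx
    rw [Nat.mem_properDivisors] at hd
    by_contra hne
    refine hfree d (Nat.pos_of_dvd_of_pos hd.1 hm) hd.2 x hne ?_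
    obtain ⟨c, hc⟩ := cyclotomic.dvd_X_pow_sub_one d ℤ
    have h := congrArg (fun p => aeval A p x) ((mul_comm _ c) ▸ hc)
    simp [hx] at h
    exact sub_eq_zero.1 h
  have hprod : ∀ s ⊆ m.properDivisors, ∀ x,
      aeval A (∏ d ∈ s, cyclotomic d ℤ) x = 0 → x = 0 := by
    intro s
    induction s using Finset.induction_on with
    | empty => intro _ x hx; simpa using hx
    | insert a s ha ih =>
      intro hs x hx
      rw [Finset.prod_insert ha, map_mul, Module.End.mul_apply] at hx
      exact ih (fun i hi => hs (Finset.mem_insert_of_mem hi)) x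
        (hinj a (hs (Finset.mem_insert_self _ _)) _ hx)
  ext x
  apply hprod _ subset_rfl
  rw [← Module.End.mul_apply, ← map_mul]
  have h := prod_cyclotomic_eq_X_pow_sub_one hm ℤ
  rw [← Nat.insert_self_properDivisors hm.ne', Finset.prod_insert (by simp), mul_comm] at h
  rw [h]
  simp [hA]

open Polynomial in
/-- If a cyclic group `G` of order `m` acts on `L = ℤⁿ` (`n ≥ 1`) by group automorphisms and the
action is free outside the origin, then the Euler totient `φ(m)` divides `n`. -/
theorem statement12 (n m : ℕ) (hn : 1 ≤ n) (hm : 1 ≤ m)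
    (G : Type*) [Group G] [IsCyclic G] (hG : Nat.card G = m)
    (ρ : Representation ℤ G (Fin n → ℤ))
    (hfree : ∀ g : G, g ≠ 1 → ∀ x : Fin n → ℤ, x ≠ 0 → ρ g x ≠ x) :
    Nat.totient m ∣ n := by
  obtain ⟨g, hg⟩ := IsCyclic.exists_generator (α := G)
  have ho : orderOf g = m := by rw [← hG]; exact orderOf_eq_card_of_forall_mem_zpowers hg
  have h0 : aeval (ρ g) (cyclotomic m ℤ) = 0 := by
    apply cyclotomic_kills_aux _ _ hm
    · rw [← map_pow, ← ho, pow_orderOf_eq_one, map_one]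
    · intro d hd hdm x hx
      rw [← map_pow]
      exact hfree _ (pow_ne_one_of_lt_orderOf hd.ne' (ho ▸ hdm)) x hx
  let F : Module.End ℤ (Fin n → ℤ) →ₐ[ℤ] Matrix (Fin n) (Fin n) ℚ :=
    ((Algebra.ofId ℤ ℚ).mapMatrix).comp (LinearMap.toMatrixAlgEquiv' : _ ≃ₐ[ℤ] _).toAlgHom
  have h1 : aeval (F (ρ g)) (cyclotomic m ℤ) = 0 := by
    rw [aeval_algHom_apply, h0, map_zero]
  have h2 : aeval (F (ρ g)) (cyclotomic m ℚ) = 0 := by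
    rw [← map_cyclotomic m (algebraMap ℤ ℚ), aeval_map_algebraMap, h1]
  have h3 : aeval (Matrix.toLinAlgEquiv' (F (ρ g))) (cyclotomic m ℚ) = 0 := by
    rw [aeval_algHom_apply, h2, map_zero]
  have h4 := finrank_dvd_aux _ _ (cyclotomic.irreducible_rat hm) h3
  simpa [natDegree_cyclotomic] using h4
end

section
/- Let C be a finite cyclic group acting on the free abelian group L = ℤⁿ by group automorphisms such that the action is free outside the origin (for every c ∈ C with c ≠ 1 and every x ∈ L with x ≠ 0, c·x ≠ x). If the order of C is divisible by at least two distinct primes, then the first group cohomology H¹(C; L) vanishes. -/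
open groupCohomology in
/-- If `a ≠ 1` has `a ^ p = 1` then `p` kills the class of every cocycle. -/
theorem cocycle_aux {n : ℕ} {C : Type} [Group C]
    (ρ : Representation ℤ C (Fin n → ℤ))
    (hcomm : ∀ a b : C, a * b = b * a)
    (hfree : ∀ c : C, c ≠ 1 → ∀ x : Fin n → ℤ, x ≠ 0 → ρ c x ≠ x)
    (f : C → Fin n → ℤ) (hf : ∀ g h : C, f (g * h) = ρ g (f h) + f g)
    (p : ℕ) (a : C) (ha : a ≠ 1) (hap : a ^ p = 1) :
    ∃ y : Fin n → ℤ, ∀ g, ρ g y - y = (p : ℤ) • f g := by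
  have hN : ∀ x : Fin n → ℤ, ∑ i ∈ Finset.range p, ρ (a ^ i) x = 0 := by
    intro x
    by_contra h
    apply hfree a ha _ h
    rw [map_sum]
    have h1 : ∀ i, ρ a (ρ (a ^ i) x) = ρ (a ^ (i + 1)) x := by
      intro i
      rw [pow_succ', map_mul]; rfl
    simp only [h1]
    have h2 := Finset.sum_range_succ (fun i => ρ (a ^ i) x) p
    have h3 := Finset.sum_range_succ' (fun i => ρ (a ^ i) x) p
    rw [h2, hap, pow_zero] at h3
    exact (add_right_cancel h3).symm
  refine ⟨-∑ i ∈ Finset.range p, f (a ^ i), fun g => ?_⟩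
  have h1 : ∑ i ∈ Finset.range p, f (a ^ i * g) = ∑ i ∈ Finset.range p, f (a ^ i) := by
    simp only [hf, Finset.sum_add_distrib, hN, zero_add]
  have h2 : ∑ i ∈ Finset.range p, f (a ^ i * g)
      = ρ g (∑ i ∈ Finset.range p, f (a ^ i)) + (p : ℤ) • f g := by
    simp only [hcomm _ g, hf, Finset.sum_add_distrib, map_sum, Finset.sum_const,
      Finset.card_range, natCast_zsmul]
  rw [h1] at h2
  rw [map_neg]
  nth_rewrite 2 [h2]
  abel

/-- Let `C` be a finite cyclic group acting on `L = ℤⁿ` by group automorphisms such that the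
action is free outside the origin.  If the order of `C` is divisible by at least two distinct
primes, then the first group cohomology `H¹(C; L)` vanishes. -/
theorem statement14 (n : ℕ) (hn : 1 ≤ n)
    (C : Type) [Group C] [Finite C] [IsCyclic C]
    (ρ : Representation ℤ C (Fin n → ℤ))
    (hfree : ∀ c : C, c ≠ 1 → ∀ x : Fin n → ℤ, x ≠ 0 → ρ c x ≠ x)
    (hpq : ∃ p q : ℕ, p.Prime ∧ q.Prime ∧ p ≠ q ∧ p ∣ Nat.card C ∧ q ∣ Nat.card C) :
    Subsingleton (groupCohomology (Rep.of ρ) 1) := by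
  obtain ⟨p, q, hp, hq, hne, hpC, hqC⟩ := hpq
  have hcomm : ∀ a b : C, a * b = b * a := fun a b => (IsCyclic.commGroup (α := C)).mul_comm a b
  refine subsingleton_of_forall_eq 0 fun x => ?_
  induction x using groupCohomology.H1_induction_on with
  | h f =>
  rw [groupCohomology.H1π_eq_zero_iff]
  have hf : ∀ g h : C, f (g * h) = ρ g (f h) + f g :=
    (groupCohomology.mem_cocycles₁_iff f.1).1 f.2
  have key : ∀ r : ℕ, r.Prime → r ∣ Nat.card C →
      ∃ y : Fin n → ℤ, ∀ g, ρ g y - y = (r : ℤ) • (f g : Fin n → ℤ) := by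
    intro r hr hrC
    haveI := Fact.mk hr
    obtain ⟨a, ha⟩ := exists_prime_orderOf_dvd_card' r hrC
    refine cocycle_aux ρ hcomm hfree (fun g => f g) hf r a ?_ (ha ▸ pow_orderOf_eq_one a)
    rintro rfl
    rw [orderOf_one] at ha
    exact hr.one_lt.ne ha
  obtain ⟨y, hy⟩ := key p hp hpC
  obtain ⟨z, hz⟩ := key q hq hqC
  have hco : IsCoprime (p : ℤ) (q : ℤ) :=
    Nat.isCoprime_iff_coprime.2 ((Nat.coprime_primes hp hq).2 hne)
  obtain ⟨u, v, huv⟩ := hco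
  refine ⟨(u • y + v • z : Fin n → ℤ), ?_⟩
  funext g
  change ρ g (u • y + v • z) - (u • y + v • z) = (f g : Fin n → ℤ)
  have : (f g : Fin n → ℤ) = u • (ρ g y - y) + v • (ρ g z - z) := by
    rw [hy, hz, smul_smul, smul_smul, ← add_smul, huv, one_smul]
  rw [this, map_add, map_smul, map_smul, smul_sub, smul_sub]
  abel
end

section
/- Write m = p₁^{r₁} ⋯ p_s^{r_s} with distinct primes p_i and r_i ≥ 1. Let C ⊆ G be a subgroup with C ≠ G and |C| = p_i^{j} for some i ∈ {1,…,s} and 1 ≤ j ≤ r_i, and let k[i] be the natural number with n = (p_i − 1)·p_i^{r_i − 1}·k[i]. Then |ℳ(C)| = (p_i^{k[i]} − 1)·p_i^{r_i}/m if j = r_i, and |ℳ(C)| = ( p_i^{k[i]·p_i^{r_i − j} + j} − p_i^{k[i]·p_i^{r_i − j − 1} + j} )/m if j ≤ r_i − 1; in particular these fractions are integers. -/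
section
open Polynomial

lemma aux_card_quot {A : Type*} [AddCommGroup A] [Module.Free ℤ A] [Module.Finite ℤ A]
    (f : Module.End ℤ A) (hf : Function.Injective f) :
    Nat.card (A ⧸ LinearMap.range f) = (LinearMap.det f).natAbs := by
  rw [← Submodule.natAbs_det_equiv (LinearMap.range f) (LinearEquiv.ofInjective f hf)]
  congr 2

lemma aux_cyc_dvd (p j : ℕ) (hp : p.Prime) :
    cyclotomic (p ^ (j+1)) ℤ ∣
      (∏ k ∈ (Finset.range (p^(j+1))).filter (fun k => k.Coprime (p^(j+1))), (1 - X ^ k)) - C (p : ℤ) := by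
  have hq : 0 < p^(j+1) := pow_pos hp.pos _
  have : NeZero (p^(j+1)) := ⟨hq.ne'⟩
  have hz := Complex.isPrimitiveRoot_exp (p^(j+1)) hq.ne'
  set z := Complex.exp (2 * Real.pi * Complex.I / ((p^(j+1) : ℕ) : ℂ)) with hzdef
  rw [cyclotomic_eq_minpoly hz hq]
  apply minpoly.isIntegrallyClosed_dvd (hz.isIntegral hq)
  have h1 : (cyclotomic (p^(j+1)) ℂ).eval 1 = p := by
    have := Fact.mk hp
    exact eval_one_cyclotomic_prime_pow j
  rw [cyclotomic_eq_prod_X_sub_primitiveRoots hz, eval_prod] at h1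
  simp only [map_sub, map_prod, map_one, map_pow, aeval_X, aeval_C]
  rw [sub_eq_zero]
  simp only [eval_sub, eval_X, eval_C] at h1
  trans (p : ℂ)
  · rw [← h1]
    refine Finset.prod_bij (fun k _ => z ^ k) ?_ ?_ ?_ ?_
    · intro k hk
      simp only [Finset.mem_filter, Finset.mem_range] at hk
      rw [mem_primitiveRoots hq]
      exact hz.pow_of_coprime k hk.2
    · intro k hk l hl h
      simp only [Finset.mem_filter, Finset.mem_range] at hk hl
      exact hz.pow_inj hk.1 hl.1 h
    · intro b hb
      rw [mem_primitiveRoots hq, hz.isPrimitiveRoot_iff] at hb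
      obtain ⟨i, hi, hc, h⟩ := hb
      exact ⟨i, Finset.mem_filter.2 ⟨Finset.mem_range.2 hi, hc⟩, h⟩
    · intros; rfl
  · simp

lemma aux_cyc_prod {R : Type*} [Ring R] (p j : ℕ) (hp : p.Prime) (c : R)
    (hc : aeval c (cyclotomic (p ^ (j+1)) ℤ) = 0) :
    aeval c (∏ k ∈ (Finset.range (p^(j+1))).filter (fun k => k.Coprime (p^(j+1))), (1 - X ^ k : ℤ[X])) = (p : R) := by
  obtain ⟨g, hg⟩ := aux_cyc_dvd p j hp
  have := congrArg (aeval c) hg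
  rw [map_mul, hc, zero_mul, map_sub, sub_eq_zero] at this
  rw [this]; simp

lemma aux_p_mem {R : Type*} [Ring R] (p j : ℕ) (hp : p.Prime) (c : R)
    (hc : aeval c (cyclotomic (p ^ (j+1)) ℤ) = 0) : ∃ g : R, (c - 1) * g = (p : R) := by
  have hd : (X - 1 : ℤ[X]) ∣ ∏ k ∈ (Finset.range (p^(j+1))).filter (fun k => k.Coprime (p^(j+1))), (1 - X ^ k : ℤ[X]) := by
    have h1 : 1 ∈ (Finset.range (p^(j+1))).filter (fun k => k.Coprime (p^(j+1))) := by
      simp [Nat.one_lt_pow (Nat.succ_ne_zero j) hp.one_lt]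
    refine dvd_trans ?_ (Finset.dvd_prod_of_mem _ h1)
    exact ⟨-1, by ring⟩
  obtain ⟨g, hg⟩ := hd
  refine ⟨aeval c g, ?_⟩
  rw [← aux_cyc_prod p j hp c hc, hg]
  simp

lemma aux_det {A : Type*} [AddCommGroup A] [Module.Free ℤ A] [Module.Finite ℤ A]
    (p j : ℕ) (hp : p.Prime) (c : Module.End ℤ A)
    (hc : aeval c (cyclotomic (p ^ (j+1)) ℤ) = 0) :
    (LinearMap.det (c - 1)).natAbs ^ (Nat.totient (p^(j+1))) = p ^ Module.finrank ℤ A := by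
  have hcq : c ^ (p^(j+1)) = 1 := by
    obtain ⟨g, hg⟩ := cyclotomic.dvd_X_pow_sub_one (p^(j+1)) ℤ
    have := congrArg (aeval c) hg
    rw [map_mul, hc, zero_mul] at this
    simpa [sub_eq_zero] using this
  have key : ∀ k : ℕ, k.Coprime (p^(j+1)) →
      (LinearMap.det (1 - c^k)).natAbs = (LinearMap.det (c-1)).natAbs := by
    intro k hk
    have hdiv : ∀ (d : Module.End ℤ A) (l : ℕ), (LinearMap.det (d - 1)).natAbs ∣ (LinearMap.det (d^l - 1)).natAbs := by
      intro d l
      rw [Int.natAbs_dvd_natAbs, ← mul_geom_sum, map_mul]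
      exact dvd_mul_right _ _
    have hneg : (LinearMap.det (1 - c^k)).natAbs = (LinearMap.det (c^k - 1)).natAbs := by
      have : (1 - c^k) = (-1 : Module.End ℤ A) * (c^k - 1) := by noncomm_ring
      rw [this, map_mul, Int.natAbs_mul]
      have h2 : (LinearMap.det (-1 : Module.End ℤ A)).natAbs = 1 := by
        have := congrArg LinearMap.det (show (-1 : Module.End ℤ A) * (-1) = 1 by simp)
        rw [map_mul, map_one] at this
        exact Int.isUnit_iff_natAbs_eq.1 (IsUnit.of_mul_eq_one _ this)
      rw [h2, one_mul]
    rw [hneg]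
    apply Nat.dvd_antisymm _ (hdiv c k)
    have hq1 : 1 < p^(j+1) := Nat.one_lt_pow (Nat.succ_ne_zero j) hp.one_lt
    obtain ⟨l, -, hl⟩ := Nat.exists_mul_mod_eq_one_of_coprime hk hq1
    have := hdiv (c^k) l
    have h3 : c ^ (k * l) = c := by
      rw [← Nat.div_add_mod (k*l) (p^(j+1)), hl, pow_add, pow_mul, hcq]; simp
    rwa [← pow_mul, h3] at this
  let F : ℤ[X] →* ℕ := (Int.natAbsHom : ℤ →* ℕ).comp
    ((LinearMap.det : Module.End ℤ A →* ℤ).comp (aeval c : ℤ[X] →ₐ[ℤ] Module.End ℤ A))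
  have hF : ∀ P, F P = (LinearMap.det (aeval c P)).natAbs := fun P => rfl
  have h := congrArg (fun f => (LinearMap.det f).natAbs) (aux_cyc_prod p j hp c hc)
  simp only [← hF] at h
  rw [map_prod, Finset.prod_congr rfl (g := fun _ => (LinearMap.det (c-1)).natAbs),
    Finset.prod_const] at h
  · rw [Nat.totient_eq_card_coprime]
    simp only [Nat.coprime_comm (n := p^(j+1))] at h ⊢
    rw [h]
    have : (p : Module.End ℤ A) = (p : ℤ) • (1 : Module.End ℤ A) := by
      ext x; simp
    rw [this, LinearMap.det_smul, map_one, mul_one, Int.natAbs_pow, Int.natAbs_natCast]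
  · intro k hk
    rw [← key k (Finset.mem_filter.1 hk).2, hF]
    simp

lemma aux_cyc_zero {A : Type*} [AddCommGroup A] (T : Module.End ℤ A) (m : ℕ) (hm : 0 < m)
    (hT : T ^ m = 1) (hfree : ∀ k, ¬ m ∣ k → ∀ x, (T^k) x = x → x = 0)
    (p j a : ℕ) (hp : p.Prime) (ha : m = a * p^(j+1)) :
    aeval (T^a) (cyclotomic (p ^ (j+1)) ℤ) = 0 := by
  have := Fact.mk hp
  have h := congrArg (aeval (T^a)) (cyclotomic_prime_pow_mul_X_pow_sub_one ℤ p j)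
  rw [mul_comm, map_mul] at h
  simp only [map_sub, map_pow, aeval_X, map_one] at h
  rw [← pow_mul, ← pow_mul, ← ha, hT, sub_self] at h
  have ha0 : 0 < a := Nat.pos_of_ne_zero (by rintro rfl; omega)
  have hnd : ¬ m ∣ a * p^j := by
    intro hd
    have := Nat.le_of_dvd (Nat.mul_pos ha0 (pow_pos hp.pos _)) hd
    rw [ha, pow_succ, ← mul_assoc] at this
    have h2 := hp.two_le
    have h3 : 0 < a * p^j := Nat.mul_pos ha0 (pow_pos hp.pos _)
    nlinarith
  ext x
  apply hfree _ hnd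
  have := LinearMap.congr_fun h x
  simpa [sub_eq_zero] using this

lemma aux_inj {A : Type*} [AddCommGroup A] (T : Module.End ℤ A) (m : ℕ)
    (hfree : ∀ k, ¬ m ∣ k → ∀ x, (T^k) x = x → x = 0) (a : ℕ) (ha : ¬ m ∣ a) :
    Function.Injective (T^a - 1 : Module.End ℤ A) := by
  rw [← LinearMap.ker_eq_bot, LinearMap.ker_eq_bot']
  intro x hx
  apply hfree a ha
  simpa [sub_eq_zero] using hx

lemma aux_ndvd {m a p j : ℕ} (hm : 0 < m) (hp : p.Prime) (ha : m = a * p^(j+1)) : ¬ m ∣ a := by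
  have ha0 : 0 < a := Nat.pos_of_ne_zero (by rintro rfl; omega)
  intro h
  have := Nat.le_of_dvd ha0 h
  have h1 : 1 < p^(j+1) := Nat.one_lt_pow (Nat.succ_ne_zero j) hp.one_lt
  nlinarith

lemma aux_card {A : Type*} [AddCommGroup A] [Module.Free ℤ A] [Module.Finite ℤ A]
    (T : Module.End ℤ A) (m : ℕ) (hm : 0 < m)
    (hT : T ^ m = 1) (hfree : ∀ k, ¬ m ∣ k → ∀ x, (T^k) x = x → x = 0)
    (p j a r k : ℕ) (hp : p.Prime) (ha : m = a * p^(j+1)) (hjr : j + 1 ≤ r)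
    (hn : Module.finrank ℤ A = (p - 1) * p^(r-1) * k) :
    Nat.card (A ⧸ LinearMap.range (T^a - 1)) = p ^ (k * p^(r-(j+1))) := by
  rw [aux_card_quot _ (aux_inj T m hfree a (aux_ndvd hm hp ha))]
  have h := aux_det p j hp (T^a) (aux_cyc_zero T m hm hT hfree p j a hp ha)
  have hpos : 0 < Nat.totient (p^(j+1)) := Nat.totient_pos.2 (pow_pos hp.pos _)
  apply Nat.pow_left_injective hpos.ne'
  simp only
  rw [h, hn, ← pow_mul, Nat.totient_prime_pow_succ hp]
  congr 1
  obtain ⟨d, rfl⟩ := Nat.exists_eq_add_of_le hjr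
  have e1 : j + 1 + d - 1 = j + d := by omega
  have e2 : j + 1 + d - (j+1) = d := by omega
  rw [e1, e2, pow_add]; ring

lemma aux_count_fixed {M : Type*} [AddCommGroup M] [Finite M] (f : Module.End ℤ M) :
    Nat.card (LinearMap.ker f) = Nat.card (M ⧸ LinearMap.range f) := by
  have h1 := Submodule.card_eq_card_quotient_mul_card (LinearMap.ker f)
  have h2 := Submodule.card_eq_card_quotient_mul_card (LinearMap.range f)
  rw [Nat.card_congr f.quotKerEquivRange.toEquiv] at h1
  have h3 : 0 < Nat.card (LinearMap.range f) := Nat.card_pos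
  rw [h1] at h2
  nlinarith

section
variable {A : Type*} [AddCommGroup A] (T : Module.End ℤ A) (a : ℕ)
  (σ : Module.End ℤ (A ⧸ LinearMap.range (T^a - 1)))
  (hσ : ∀ x, σ (Submodule.Quotient.mk x) = Submodule.Quotient.mk (T x))

include hσ

lemma aux_sigma_pow (k : ℕ) (x : A) :
    (σ^k) (Submodule.Quotient.mk x) = Submodule.Quotient.mk ((T^k) x) := by
  induction k with
  | zero => simp
  | succ k ih => rw [pow_succ', pow_succ', Module.End.mul_apply, Module.End.mul_apply, ih, hσ]

lemma aux_sigma_a : σ^a = 1 := by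
  refine LinearMap.ext fun x => ?_
  obtain ⟨x, rfl⟩ := Submodule.Quotient.mk_surjective _ x
  rw [Module.End.one_apply]
  rw [aux_sigma_pow T a σ hσ, Submodule.Quotient.eq]
  exact ⟨x, by simp⟩

lemma aux_fixed_card [Finite (A ⧸ LinearMap.range (T^a - 1))] (b : ℕ) (hb : b ∣ a) :
    Nat.card {x // (σ^b) x = x} = Nat.card (A ⧸ LinearMap.range (T^b - 1)) := by
  have h1 : Nat.card {x // (σ^b) x = x} = Nat.card (LinearMap.ker (σ^b - 1)) := by
    apply Nat.card_congr
    exact Equiv.subtypeEquivRight (fun x => by simp [sub_eq_zero])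
  rw [h1, aux_count_fixed]
  symm
  apply Nat.card_congr
  let f : A →ₗ[ℤ] (A ⧸ LinearMap.range (T^a - 1)) ⧸ LinearMap.range (σ^b - 1) :=
    (Submodule.mkQ _).comp (Submodule.mkQ _)
  have hf : Function.Surjective f :=
    (Submodule.mkQ_surjective _).comp (Submodule.mkQ_surjective _)
  have hk : LinearMap.ker f = LinearMap.range (T^b - 1) := by
    ext x
    simp only [LinearMap.mem_ker, f, LinearMap.comp_apply, Submodule.mkQ_apply,
      Submodule.Quotient.mk_eq_zero]
    constructor
    · rintro ⟨y, hy⟩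
      obtain ⟨y, rfl⟩ := Submodule.Quotient.mk_surjective _ y
      rw [LinearMap.sub_apply, aux_sigma_pow T a σ hσ, Module.End.one_apply,
        ← Submodule.Quotient.mk_sub, eq_comm, Submodule.Quotient.eq] at hy
      obtain ⟨z, hz⟩ := hy
      obtain ⟨e, rfl⟩ := hb
      rw [pow_mul, ← mul_geom_sum, Module.End.mul_apply] at hz
      refine ⟨(∑ i ∈ Finset.range e, (T ^ b) ^ i) z + y, ?_⟩
      rw [map_add, hz]; simp
    · rintro ⟨y, rfl⟩
      refine ⟨Submodule.Quotient.mk y, ?_⟩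
      rw [LinearMap.sub_apply, aux_sigma_pow T a σ hσ]
      simp
  rw [← hk]
  exact (f.quotKerEquivOfSurjective hf).toEquiv

lemma aux_nonmax (x) (hx : Function.minimalPeriod σ x ≠ a) :
    ∃ l : ℕ, l.Prime ∧ l ∣ a ∧ (σ^(a/l)) x = x := by
  have hper : Function.IsPeriodicPt σ a x := by
    have := LinearMap.congr_fun (aux_sigma_a T a σ hσ) x
    rw [Module.End.pow_apply] at this
    exact this
  obtain ⟨e, he⟩ := hper.minimalPeriod_dvd
  have he1 : e ≠ 1 := by rintro rfl; omega
  obtain ⟨l, hl, d, hd⟩ := Nat.exists_prime_and_dvd he1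
  refine ⟨l, hl, ?_, ?_⟩
  · rw [he, hd]; exact ⟨_ * d, by ring⟩
  · have h2 : a / l = Function.minimalPeriod σ x * d := by
      apply Nat.div_eq_of_eq_mul_right hl.pos
      conv_lhs => rw [he, hd]
      ring
    rw [Module.End.pow_apply, h2]
    exact (Function.isPeriodicPt_minimalPeriod σ x).mul_const d

lemma aux_other_prime (m : ℕ) (hm : 0 < m)
    (hT : T ^ m = 1) (hfree : ∀ k, ¬ m ∣ k → ∀ x, (T^k) x = x → x = 0)
    (p j : ℕ) (hp : p.Prime) (ha : m = a * p^(j+1)) (l : ℕ) (hl : l.Prime) (hlp : l ≠ p)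
    (hla : l ∣ a) (x) (hx : (σ^(a/l)) x = x) : x = 0 := by
  -- `p x = 0`
  have hpx : (p : ℤ) • x = 0 := by
    obtain ⟨g, hg⟩ := aux_p_mem p j hp (T^a) (aux_cyc_zero T m hm hT hfree p j a hp ha)
    obtain ⟨y, rfl⟩ := Submodule.Quotient.mk_surjective _ x
    rw [← Submodule.Quotient.mk_smul, Submodule.Quotient.mk_eq_zero]
    refine ⟨g y, ?_⟩
    rw [← Module.End.mul_apply, hg]
    simp
  have hlx : (l : ℤ) • x = 0 := by
    obtain ⟨d, rfl⟩ := hla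
    have hd : l * d / l = d := Nat.mul_div_cancel_left d hl.pos
    rw [hd] at hx
    set b := d * p^(j+1) with hb
    have hmb : m = b * l := by rw [ha, hb]; ring
    have hxb : ∀ i, ((σ^b)^i) x = x := by
      intro i
      rw [hb, ← pow_mul, mul_assoc, pow_mul σ, Module.End.pow_apply]
      exact Function.iterate_fixed hx _
    have hnd : ¬ m ∣ b := by
      have : m = b * l^(0+1) := by simpa using hmb
      exact aux_ndvd hm hl this
    have hN : ∑ i ∈ Finset.range l, (T^b)^i = 0 := by
      have h := mul_geom_sum (T^b) l
      rw [← pow_mul, ← hmb, hT, sub_self] at h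
      ext y
      apply aux_inj T m hfree b hnd
      rw [← Module.End.mul_apply, h]; simp
    have h2 : (∑ i ∈ Finset.range l, (σ^b)^i) x = 0 := by
      obtain ⟨y, rfl⟩ := Submodule.Quotient.mk_surjective _ x
      have := congrArg (Submodule.mkQ (LinearMap.range (T^(l*d) - 1))) (LinearMap.congr_fun hN y)
      rw [LinearMap.zero_apply, map_zero] at this
      rw [← this, LinearMap.sum_apply, LinearMap.sum_apply, map_sum]
      refine Finset.sum_congr rfl fun i _ => ?_
      rw [← pow_mul, ← pow_mul, aux_sigma_pow T _ σ hσ]; rfl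
    rw [LinearMap.sum_apply, Finset.sum_congr rfl (fun i _ => hxb i)] at h2
    simpa using h2
  have hcop : IsCoprime (l : ℤ) (p : ℤ) := by
    rw [Nat.isCoprime_iff_coprime]; exact (Nat.coprime_primes hl hp).2 hlp
  obtain ⟨u, v, huv⟩ := hcop
  rw [← one_smul ℤ x, ← huv, add_smul, mul_smul, mul_smul, hlx, hpx]; simp

lemma aux_count1 [Module.Free ℤ A] [Module.Finite ℤ A] (m : ℕ) (hm : 0 < m)
    (hT : T ^ m = 1) (hfree : ∀ k, ¬ m ∣ k → ∀ x, (T^k) x = x → x = 0)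
    (p j r k : ℕ) (hp : p.Prime) (ha : m = a * p^(j+1)) (hjr : j + 1 ≤ r)
    (hn : Module.finrank ℤ A = (p - 1) * p^(r-1) * k) :
    Finite (A ⧸ LinearMap.range (T^a - 1)) ∧
    (j + 1 = r → ¬ p ∣ a → a ≠ 1 →
      Nat.card {x // Function.minimalPeriod σ x = a} = p ^ k - 1) ∧
    (j + 1 < r → p ∣ a →
      Nat.card {x // Function.minimalPeriod σ x = a} =
        p ^ (k * p ^ (r - (j+1))) - p ^ (k * p ^ (r - (j + 1) - 1))) := by
  have ha0 : 0 < a := Nat.pos_of_ne_zero (by rintro rfl; omega)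
  have hcard := aux_card T m hm hT hfree p j a r k hp ha hjr hn
  have hfin : Finite (A ⧸ LinearMap.range (T^a - 1)) :=
    Nat.finite_of_card_ne_zero (by rw [hcard]; exact (pow_pos hp.pos _).ne')
  have hcompl : Nat.card {x // Function.minimalPeriod σ x = a} =
      Nat.card (A ⧸ LinearMap.range (T^a - 1)) - Nat.card {x // ¬ Function.minimalPeriod σ x = a} := by
    classical
    rw [← Nat.card_congr (Equiv.sumCompl (fun x => Function.minimalPeriod σ x = a)), Nat.card_sum]
    omega
  refine ⟨hfin, ?_, ?_⟩
  · intro hj hpa ha1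
    rw [hcompl, hcard]
    have : Nat.card {x // ¬ Function.minimalPeriod σ x = a} = 1 := by
      rw [Nat.card_eq_one_iff_exists]
      refine ⟨⟨0, ?_⟩, ?_⟩
      · have : Function.minimalPeriod σ 0 = 1 := by
          rw [Function.minimalPeriod_eq_one_iff_isFixedPt]
          exact map_zero σ
        rw [this]; exact ha1.symm
      · rintro ⟨x, hx⟩
        obtain ⟨l, hl, hla, hx'⟩ := aux_nonmax T a σ hσ x hx
        have hlp : l ≠ p := by rintro rfl; exact hpa hla
        exact Subtype.ext (aux_other_prime T a σ hσ m hm hT hfree p j hp ha l hl hlp hla x hx')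
    rw [this, hj]; simp
  · intro hj hpa
    rw [hcompl, hcard]
    have h1 : Nat.card {x // ¬ Function.minimalPeriod σ x = a} = Nat.card {x // (σ^(a/p)) x = x} := by
      apply Nat.card_congr
      apply Equiv.subtypeEquivRight
      intro x
      constructor
      · intro hx
        obtain ⟨l, hl, hla, hx'⟩ := aux_nonmax T a σ hσ x hx
        by_cases hlp : l = p
        · rw [← hlp]; exact hx'
        · rw [aux_other_prime T a σ hσ m hm hT hfree p j hp ha l hl hlp hla x hx', map_zero]
      · intro hx hx2
        rw [Module.End.pow_apply] at hx
        have h3 : Function.IsPeriodicPt σ (a/p) x := hx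
        have h4 := h3.minimalPeriod_dvd
        rw [hx2] at h4
        have h5 := Nat.le_of_dvd (Nat.div_pos (Nat.le_of_dvd ha0 hpa) hp.pos) h4
        have h6 := Nat.div_lt_self ha0 hp.one_lt
        omega
    rw [h1, aux_fixed_card T a σ hσ (a/p) (Nat.div_dvd_of_dvd hpa)]
    have ha' : m = (a/p) * p^((j+1)+1) := by
      rw [pow_succ, mul_comm (p^(j+1)), ← mul_assoc, Nat.div_mul_cancel hpa]; exact ha
    rw [aux_card T m hm hT hfree p (j+1) (a/p) r k hp ha' (by omega) hn]
    rfl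
end
end

lemma aux_orbit {M Q : Type*} [Finite M] (f : M → M) (a : ℕ) (ha : 0 < a)
    (F : {x // Function.minimalPeriod f x = a} → Q) (hF : Function.Surjective F)
    (h : ∀ x y, F x = F y ↔ ∃ k : ℕ, y.1 = f^[k] x.1) :
    Finite Q ∧ Nat.card {x // Function.minimalPeriod f x = a} = Nat.card Q * a := by
  refine ⟨Finite.of_surjective F hF, ?_⟩
  have hmem : ∀ x : {x // Function.minimalPeriod f x = a}, x.1 ∈ Function.periodicPts f := by
    intro x
    rw [← Function.minimalPeriod_pos_iff_mem_periodicPts, x.2]; exact ha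
  let s := Function.surjInv hF
  have hs : ∀ q, F (s q) = q := Function.surjInv_eq hF
  let g : Q × Fin a → {x // Function.minimalPeriod f x = a} := fun z =>
    ⟨f^[z.2.1] (s z.1).1, by
      rw [Function.minimalPeriod_apply_iterate (hmem _)]; exact (s z.1).2⟩
  have hFg : ∀ z, F (g z) = z.1 := by
    intro z
    conv_rhs => rw [← hs z.1]
    symm
    rw [h]
    exact ⟨z.2.1, rfl⟩
  have hg : Function.Bijective g := by
    constructor
    · rintro ⟨q, i⟩ ⟨q', i'⟩ hz
      have h1 : q = q' := by
        have := congrArg F hz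
        rwa [hFg, hFg] at this
      subst h1
      have h2 : f^[i.1] (s q).1 = f^[i'.1] (s q).1 := congrArg Subtype.val hz
      have h3 : i.1 = i'.1 := Function.iterate_injOn_Iio_minimalPeriod
        (by rw [(s q).2]; exact i.2) (by rw [(s q).2]; exact i'.2) h2
      rw [Fin.ext h3]
    · intro x
      obtain ⟨k, hk⟩ := (h (s (F x)) x).1 (hs _)
      refine ⟨⟨F x, ⟨k % a, Nat.mod_lt _ ha⟩⟩, Subtype.ext ?_⟩
      change f^[k % a] (s (F x)).1 = x.1
      rw [hk]
      have := @Function.iterate_mod_minimalPeriod_eq _ f (s (F x)).1 k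
      rwa [(s (F x)).2] at this
  rw [← Nat.card_congr (Equiv.ofBijective g hg), Nat.card_prod]
  simp

lemma aux_subconj_equiv (Γ : Type*) [Group Γ] : Equivalence (SubConj Γ) := by
  refine ⟨fun H => ⟨1, ?_⟩, ?_, ?_⟩
  · ext x; simp
  · rintro H K ⟨γ, rfl⟩
    refine ⟨γ⁻¹, ?_⟩
    rw [Subgroup.map_map]
    ext x; simp [mul_assoc]
  · rintro H K J ⟨γ, rfl⟩ ⟨δ, rfl⟩
    refine ⟨δ * γ, ?_⟩
    rw [Subgroup.map_map]
    congr 1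
    ext x; simp [mul_assoc]

section
variable {Γ : Type*} [Group Γ] (L : Subgroup Γ) [L.Normal]

lemma aux_pi_eq {g h : Γ} :
    QuotientGroup.mk' L g = QuotientGroup.mk' L h ↔ g * h⁻¹ ∈ L := by
  rw [← QuotientGroup.eq_one_iff (N := L)]
  rw [QuotientGroup.mk_mul, QuotientGroup.mk_inv, mul_inv_eq_one]
  rfl

lemma aux_comm (hcyc : IsCyclic (Γ ⧸ L)) (x y : Γ ⧸ L) : x * y = y * x := by
  let _ := hcyc.commGroup
  exact mul_comm x y

lemma aux_finite_comm (hcyc : IsCyclic (Γ ⧸ L))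
    (htf : ∀ K : Subgroup Γ, (K : Set Γ).Finite → ∀ g ∈ K, g ∈ L → g = 1)
    (K : Subgroup Γ) (hK : (K : Set Γ).Finite) (g h : Γ) (hg : g ∈ K) (hh : h ∈ K) :
    g * h = h * g := by
  have : (g * h) * (h * g)⁻¹ = 1 := by
    apply htf K hK _ (K.mul_mem (K.mul_mem hg hh) (K.inv_mem (K.mul_mem hh hg)))
    rw [← aux_pi_eq]
    simp only [map_mul]
    exact aux_comm L hcyc _ _
  exact mul_inv_eq_one.1 this

lemma aux_cent_L (hfree : ∀ γ : Γ, γ ∉ L → ∀ x : Γ, x ∈ L → x ≠ 1 → γ * x * γ⁻¹ ≠ x)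
    (h : Γ) (hh : h ∉ L) (x : Γ) (hx : x ∈ L) (hc : x ∈ Subgroup.centralizer {h}) : x = 1 := by
  by_contra hne
  apply hfree h hh x hx hne
  rw [Subgroup.mem_centralizer_singleton_iff] at hc
  rw [← hc]; simp

lemma aux_cent_finite [Finite (Γ ⧸ L)]
    (hfree : ∀ γ : Γ, γ ∉ L → ∀ x : Γ, x ∈ L → x ≠ 1 → γ * x * γ⁻¹ ≠ x)
    (h : Γ) (hh : h ∉ L) : ((Subgroup.centralizer {h} : Subgroup Γ) : Set Γ).Finite := by
  refine Set.Finite.of_finite_image (f := QuotientGroup.mk' L) (Set.toFinite _) ?_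
  intro x hx y hy hxy
  rw [aux_pi_eq] at hxy
  have := aux_cent_L L hfree h hh _ hxy (Subgroup.mul_mem _ hx (Subgroup.inv_mem _ hy))
  exact mul_inv_eq_one.1 this

lemma aux_zpowers_le_cent (h : Γ) : Subgroup.zpowers h ≤ Subgroup.centralizer {h} := by
  rw [Subgroup.zpowers_le, Subgroup.mem_centralizer_singleton_iff]

lemma aux_maxfin_iff [Finite (Γ ⧸ L)] (hcyc : IsCyclic (Γ ⧸ L))
    (hfree : ∀ γ : Γ, γ ∉ L → ∀ x : Γ, x ∈ L → x ≠ 1 → γ * x * γ⁻¹ ≠ x)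
    (htf : ∀ K : Subgroup Γ, (K : Set Γ).Finite → ∀ g ∈ K, g ∈ L → g = 1)
    (h : Γ) (hh : h ∉ L) :
    IsMaxFin Γ (Subgroup.zpowers h) ↔ Subgroup.centralizer {h} ≤ Subgroup.zpowers h := by
  constructor
  · rintro ⟨-, hmax⟩
    exact (hmax _ (aux_cent_finite L hfree h hh) (aux_zpowers_le_cent h)).ge
  · intro hle
    refine ⟨(aux_cent_finite L hfree h hh).subset (aux_zpowers_le_cent h), ?_⟩
    intro K hK hKh
    apply le_antisymm hKh
    refine le_trans ?_ hle
    intro g hg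
    rw [Subgroup.mem_centralizer_singleton_iff]
    exact aux_finite_comm L hcyc htf K hK _ _ hg (hKh (Subgroup.mem_zpowers h))
end

section
variable {Γ : Type*} [Group Γ] (L : Subgroup Γ) [L.Normal]
  {A : Type*} [AddCommGroup A] (ι : A → Γ) (hadd : ∀ x y, ι (x + y) = ι x * ι y)
  (hinj : Function.Injective ι) (hrange : ∀ g, g ∈ L ↔ ∃ x, ι x = g)
  (t : Γ) (T : Module.End ℤ A) (hT : ∀ x, ι (T x) = t * ι x * t⁻¹)
  (a : ℕ) (σ : Module.End ℤ (A ⧸ LinearMap.range (T^a - 1)))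
  (hσ : ∀ x, σ (Submodule.Quotient.mk x) = Submodule.Quotient.mk (T x))

include hadd
lemma aux_iota_zero : ι 0 = 1 := by
  have := hadd 0 0
  simpa using this

lemma aux_iota_neg (x : A) : ι (-x) = (ι x)⁻¹ := by
  rw [eq_inv_iff_mul_eq_one, ← hadd, neg_add_cancel, aux_iota_zero ι hadd]

omit hadd in
include hT in
lemma aux_T_pow (k : ℕ) (x : A) : ι ((T^k) x) = t^k * ι x * (t^k)⁻¹ := by
  induction k with
  | zero => simp
  | succ k ih => rw [pow_succ', Module.End.mul_apply, hT, ih, pow_succ']; group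

include hT in
lemma aux_conj_s16 (k : ℕ) (x l : A) :
    (ι x * t^k) * (ι l * t^a) * (ι x * t^k)⁻¹ = ι ((T^k) l - (T^a - 1 : Module.End ℤ A) x) * t^a := by
  have e : (T^k) l - (T^a - 1 : Module.End ℤ A) x = x + ((T^k) l + - (T^a) x) := by
    simp; abel
  rw [e, hadd, hadd, aux_iota_neg ι hadd, aux_T_pow ι t T hT, aux_T_pow ι t T hT]
  have : t^k * t^a = t^a * t^k := by rw [← pow_add, ← pow_add, add_comm]
  have h2 : t^a * (t^k)⁻¹ = (t^k)⁻¹ * t^a := by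
    rw [mul_inv_eq_iff_eq_mul, mul_assoc, ← this, inv_mul_cancel_left]
  simp only [mul_inv_rev, mul_assoc, inv_inv]
  rw [inv_mul_cancel, mul_one, ← mul_assoc (t^a), h2, mul_assoc]

include hinj hT hσ in
lemma aux_conj_iff (k : ℕ) (l l' : A) :
    (∃ x, (ι x * t^k) * (ι l * t^a) * (ι x * t^k)⁻¹ = ι l' * t^a) ↔
      (Submodule.Quotient.mk l' : A ⧸ LinearMap.range (T^a - 1)) =
        (σ^k) (Submodule.Quotient.mk l) := by
  rw [aux_sigma_pow T a σ hσ, eq_comm, Submodule.Quotient.eq]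
  simp only [aux_conj_s16 ι hadd t T hT, mul_left_inj, hinj.eq_iff, LinearMap.mem_range]
  refine exists_congr fun x => ?_
  constructor
  · intro h; rw [← h]; abel
  · intro h; rw [h]; abel

variable (hcyc : IsCyclic (Γ ⧸ L))
    (hfree : ∀ γ : Γ, γ ∉ L → ∀ x : Γ, x ∈ L → x ≠ 1 → γ * x * γ⁻¹ ≠ x)
    (htf : ∀ K : Subgroup Γ, (K : Set Γ).Finite → ∀ g ∈ K, g ∈ L → g = 1)
    (m : ℕ) (hm : 0 < m) (hgen : ∀ γ : Γ, ∃ x : A, ∃ k : ℕ, γ = ι x * t^k)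
    (ht : ∀ k : ℕ, t^k ∈ L ↔ m ∣ k) (q : ℕ) (haq : m = a * q) (hq : 1 < q)

omit hadd
include hrange ht hm haq hq in
lemma aux_h_not_mem (l : A) : ι l * t^a ∉ L := by
  intro h
  rw [Subgroup.mul_mem_cancel_left _ ((hrange _).2 ⟨l, rfl⟩), ht] at h
  have ha0 : 0 < a := Nat.pos_of_ne_zero (by rintro rfl; omega)
  have := Nat.le_of_dvd ha0 h
  nlinarith

include hrange in
lemma aux_pi_h (k : ℕ) (l : A) : QuotientGroup.mk' L (ι l * t^k) = (QuotientGroup.mk' L t)^k := by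
  rw [map_mul, map_pow]
  have : QuotientGroup.mk' L (ι l) = 1 := (QuotientGroup.eq_one_iff _).2 ((hrange _).2 ⟨l, rfl⟩)
  rw [this, one_mul]

include hadd hinj hrange hT hσ hcyc hfree htf hm hgen ht haq hq in
lemma aux_conj_classes [Finite (Γ ⧸ L)] (l l' : A) :
    SubConj Γ (Subgroup.zpowers (ι l * t^a)) (Subgroup.zpowers (ι l' * t^a)) ↔
      ∃ k : ℕ, (Submodule.Quotient.mk l' : A ⧸ LinearMap.range (T^a - 1)) =
        (σ^k) (Submodule.Quotient.mk l) := by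
  have hh' := aux_h_not_mem L ι hrange t a m hm ht q haq hq l'
  constructor
  · rintro ⟨γ, hγ⟩
    rw [MonoidHom.map_zpowers] at hγ
    obtain ⟨x, k, rfl⟩ := hgen γ
    refine ⟨k, (aux_conj_iff ι hadd hinj t T hT a σ hσ k l l').1 ⟨x, ?_⟩⟩
    rw [← mul_inv_eq_one]
    apply htf _ ((aux_cent_finite L hfree _ hh').subset (aux_zpowers_le_cent _))
    · apply Subgroup.mul_mem _ _ (Subgroup.inv_mem _ (Subgroup.mem_zpowers _))
      rw [hγ]
      exact Subgroup.mem_zpowers _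
    · rw [← aux_pi_eq, map_mul, map_mul, aux_comm L hcyc (_ * _), map_inv, inv_mul_cancel_left,
        aux_pi_h L ι hrange, aux_pi_h L ι hrange]
  · rintro ⟨k, hk⟩
    obtain ⟨x, hx⟩ := (aux_conj_iff ι hadd hinj t T hT a σ hσ k l l').2 hk
    refine ⟨ι x * t^k, ?_⟩
    rw [MonoidHom.map_zpowers, ← hx]
    rfl

include ht haq in
lemma aux_mem_zpowers (b : ℕ)
    (hb : (QuotientGroup.mk' L t)^b ∈ Subgroup.zpowers ((QuotientGroup.mk' L t)^a)) : a ∣ b := by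
  obtain ⟨i, hi⟩ := hb
  have ho : orderOf (QuotientGroup.mk' L t) = m := by
    apply Nat.dvd_antisymm
    · rw [orderOf_dvd_iff_pow_eq_one, ← map_pow]
      exact (QuotientGroup.eq_one_iff _).2 ((ht m).2 dvd_rfl)
    · rw [← ht]
      have := pow_orderOf_eq_one (QuotientGroup.mk' L t)
      rw [← map_pow] at this
      exact (QuotientGroup.eq_one_iff _).1 this
  simp only at hi
  rw [← zpow_natCast, ← zpow_natCast, ← zpow_mul, zpow_eq_zpow_iff_modEq, ho] at hi
  have h1 : (a : ℤ) ∣ (b : ℤ) - a * i :=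
    dvd_trans (by rw [haq]; push_cast; exact dvd_mul_right _ _) hi.dvd
  have h2 := (dvd_sub_left (dvd_mul_right (a : ℤ) i)).1 h1
  exact Int.natCast_dvd_natCast.1 h2

include hadd hinj hrange hT hσ hcyc hfree htf hm hgen ht haq hq in
lemma aux_max_iff [Finite (Γ ⧸ L)] (l : A) :
    IsMaxFin Γ (Subgroup.zpowers (ι l * t^a)) ↔
      Function.minimalPeriod σ (Submodule.Quotient.mk l) = a := by
  have hh := aux_h_not_mem L ι hrange t a m hm ht q haq hq l
  rw [aux_maxfin_iff L hcyc hfree htf _ hh]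
  have hper : Function.IsPeriodicPt σ a (Submodule.Quotient.mk l) := by
    have := LinearMap.congr_fun (aux_sigma_a T a σ hσ) (Submodule.Quotient.mk l)
    rw [Module.End.pow_apply] at this
    exact this
  constructor
  · intro hle
    apply Nat.dvd_antisymm hper.minimalPeriod_dvd
    set b := Function.minimalPeriod σ (Submodule.Quotient.mk l) with hb
    have hfix : Submodule.Quotient.mk l = (σ^b) (Submodule.Quotient.mk l) := by
      rw [Module.End.pow_apply, hb]
      exact (Function.isPeriodicPt_minimalPeriod σ _).symm
    obtain ⟨x, hx⟩ := (aux_conj_iff ι hadd hinj t T hT a σ hσ b l l).2 hfix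
    have h1 : ι x * t^b ∈ Subgroup.centralizer {ι l * t^a} := by
      rw [Subgroup.mem_centralizer_singleton_iff]
      exact mul_inv_eq_iff_eq_mul.1 hx
    have h2 := Subgroup.mem_map_of_mem (QuotientGroup.mk' L) (hle h1)
    rw [MonoidHom.map_zpowers, aux_pi_h L ι hrange, aux_pi_h L ι hrange] at h2
    exact aux_mem_zpowers L t a m ht q haq b h2
  · intro hmin γ hγ
    obtain ⟨x, k, rfl⟩ := hgen γ
    have h1 := (aux_conj_iff ι hadd hinj t T hT a σ hσ k l l).1 ⟨x, by
      rw [Subgroup.mem_centralizer_singleton_iff] at hγ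
      exact mul_inv_eq_iff_eq_mul.2 hγ⟩
    have h2 : Function.IsPeriodicPt σ k (Submodule.Quotient.mk l) := by
      rw [Module.End.pow_apply] at h1
      exact h1.symm
    have h3 := h2.minimalPeriod_dvd
    rw [hmin] at h3
    obtain ⟨i, rfl⟩ := h3
    refine ⟨i, ?_⟩
    symm
    simp only [zpow_natCast]
    rw [← mul_inv_eq_one]
    apply aux_cent_L L hfree _ hh
    · rw [← aux_pi_eq, map_pow, aux_pi_h L ι hrange, aux_pi_h L ι hrange, pow_mul]
    · exact Subgroup.mul_mem _ hγ (Subgroup.inv_mem _ (Subgroup.pow_mem _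
        (aux_zpowers_le_cent _ (Subgroup.mem_zpowers _)) _))

include hrange htf in
lemma aux_exists_l (H : Subgroup Γ) (hH : (H : Set Γ).Finite)
    (hC : Subgroup.map (QuotientGroup.mk' L) H = Subgroup.zpowers ((QuotientGroup.mk' L t)^a)) :
    ∃ l, H = Subgroup.zpowers (ι l * t^a) := by
  have h1 : (QuotientGroup.mk' L t)^a ∈ Subgroup.map (QuotientGroup.mk' L) H := by
    rw [hC]; exact Subgroup.mem_zpowers _
  obtain ⟨h, hhH, hh⟩ := h1
  rw [← map_pow, aux_pi_eq, hrange] at hh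
  obtain ⟨l, hl⟩ := hh
  have hl' : ι l * t^a = h := by rw [hl]; simp
  refine ⟨l, ?_⟩
  rw [hl']
  apply le_antisymm
  · intro g hg
    have h2 := Subgroup.mem_map_of_mem (QuotientGroup.mk' L) hg
    rw [hC, ← aux_pi_h L ι hrange t a l, hl'] at h2
    obtain ⟨i, hi⟩ := h2
    refine ⟨i, ?_⟩
    simp only at hi ⊢
    rw [← map_zpow, aux_pi_eq] at hi
    rw [← mul_inv_eq_one]
    exact htf H hH _ (H.mul_mem (H.zpow_mem hhH i) (H.inv_mem hg)) hi
  · rw [Subgroup.zpowers_le]; exact hhH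

include hadd hinj hrange hT hσ hcyc hfree htf hm hgen ht haq hq in
lemma aux_group_main [Finite (Γ ⧸ L)] [Finite (A ⧸ LinearMap.range (T^a - 1))]
    (C : Subgroup (Γ ⧸ L)) (hC : C = Subgroup.zpowers ((QuotientGroup.mk' L t)^a)) :
    Finite (MaxFinClassesOver Γ L C) ∧
    Nat.card {x // Function.minimalPeriod σ x = a} = Nat.card (MaxFinClassesOver Γ L C) * a := by
  have ha0 : 0 < a := Nat.pos_of_ne_zero (by rintro rfl; omega)
  have hmk := Submodule.Quotient.mk_surjective (LinearMap.range (T^a - 1))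
  let u := Function.surjInv hmk
  have hu : ∀ x, Submodule.Quotient.mk (u x) = x := Function.surjInv_eq hmk
  have hmax := aux_max_iff L ι hadd hinj hrange t T hT a σ hσ hcyc hfree htf m hm hgen ht q haq hq
  have hconj := aux_conj_classes L ι hadd hinj hrange t T hT a σ hσ hcyc hfree htf m hm hgen ht q haq hq
  have hmap : ∀ l, Subgroup.map (QuotientGroup.mk' L) (Subgroup.zpowers (ι l * t^a)) = C := by
    intro l
    rw [MonoidHom.map_zpowers, aux_pi_h L ι hrange, hC]
  have heq : ∀ H K : {H : Subgroup Γ // Subgroup.map (QuotientGroup.mk' L) H = C ∧ IsMaxFin Γ H},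
      (Quot.mk _ H : MaxFinClassesOver Γ L C) = Quot.mk _ K ↔ SubConj Γ H.1 K.1 := by
    intro H K
    rw [Quot.eq]
    exact ((aux_subconj_equiv Γ).comap Subtype.val).eqvGen_iff
  let F : {x // Function.minimalPeriod σ x = a} → MaxFinClassesOver Γ L C := fun x =>
    Quot.mk _ ⟨Subgroup.zpowers (ι (u x.1) * t^a), hmap _, (hmax _).2 (by rw [hu]; exact x.2)⟩
  apply aux_orbit σ a ha0 F
  · intro Q
    obtain ⟨⟨H, hH1, hH2⟩, rfl⟩ := Quot.exists_rep Q
    obtain ⟨l, rfl⟩ := aux_exists_l L ι hrange t a htf H hH2.1 (hH1.trans hC)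
    refine ⟨⟨Submodule.Quotient.mk l, (hmax l).1 hH2⟩, ?_⟩
    refine (heq _ _).2 ?_
    change SubConj Γ (Subgroup.zpowers (ι (u (Submodule.Quotient.mk l)) * t^a)) (Subgroup.zpowers (ι l * t^a))
    rw [hconj]
    exact ⟨0, by rw [hu]; simp⟩
  · intro x y
    refine (heq _ _).trans ?_
    change SubConj Γ (Subgroup.zpowers (ι (u x.1) * t^a)) (Subgroup.zpowers (ι (u y.1) * t^a)) ↔ _
    rw [hconj]
    simp only [hu, Module.End.pow_apply]
end

/-- Write `m = p₁^{r₁} ⋯ p_s^{r_s}` with distinct primes, in the setting of the paper (`L ≅ ℤⁿ`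
normal in `Γ`, `G = Γ/L` cyclic of order `m`, conjugation action free outside the origin).  Let
`C ⊊ G` with `|C| = p_i^j`, `1 ≤ j ≤ r_i`, and let `k[i]` satisfy `n = (p_i−1)·p_i^{r_i−1}·k[i]`.
Then `ℳ(C)` is finite and `m·|ℳ(C)| = (p_i^{k[i]} − 1)·p_i^{r_i}` if `j = r_i`, while
`m·|ℳ(C)| = p_i^{k[i]·p_i^{r_i−j}+j} − p_i^{k[i]·p_i^{r_i−j−1}+j}` if `j ≤ r_i − 1`; in
particular the corresponding fractions with denominator `m` are integers. -/
theorem statement16 (n m : ℕ) (hn : 1 ≤ n) (hm : 1 ≤ m)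
    (Γ : Type*) [Group Γ] (L : Subgroup Γ) [L.Normal]
    (hL : Nonempty (L ≃* Multiplicative (Fin n → ℤ)))
    (hcyc : IsCyclic (Γ ⧸ L)) (hcard : Nat.card (Γ ⧸ L) = m)
    (hfree : ∀ γ : Γ, γ ∉ L → ∀ x : Γ, x ∈ L → x ≠ 1 → γ * x * γ⁻¹ ≠ x)
    (s : ℕ) (p r : Fin s → ℕ) (hp : ∀ i, (p i).Prime) (hpinj : Function.Injective p)
    (hr : ∀ i, 1 ≤ r i) (hmprod : m = ∏ i, p i ^ r i)
    (i : Fin s) (j : ℕ) (hj1 : 1 ≤ j) (hjr : j ≤ r i)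
    (C : Subgroup (Γ ⧸ L)) (hCne : C ≠ ⊤) (hCcard : Nat.card C = p i ^ j)
    (kI : ℕ) (hkI : n = (p i - 1) * p i ^ (r i - 1) * kI) :
    Finite (MaxFinClassesOver Γ L C) ∧
    (j = r i → Nat.card (MaxFinClassesOver Γ L C) * m = (p i ^ kI - 1) * p i ^ r i) ∧
    (j ≤ r i - 1 → Nat.card (MaxFinClassesOver Γ L C) * m =
      p i ^ (kI * p i ^ (r i - j) + j) - p i ^ (kI * p i ^ (r i - j - 1) + j)) := by
  obtain ⟨ψ⟩ := hL
  let ι : (Fin n → ℤ) → Γ := fun x => ((ψ.symm (Multiplicative.ofAdd x) : L) : Γ)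
  have hadd : ∀ x y, ι (x + y) = ι x * ι y := by
    intro x y; simp [ι, ofAdd_add]
  have hinj : Function.Injective ι := by
    intro x y h
    exact Multiplicative.ofAdd.injective (ψ.symm.injective (Subtype.ext h))
  have hrange : ∀ g, g ∈ L ↔ ∃ x, ι x = g := by
    intro g
    constructor
    · intro hg
      exact ⟨Multiplicative.toAdd (ψ ⟨g, hg⟩), by simp [ι]⟩
    · rintro ⟨x, rfl⟩
      exact (ψ.symm (Multiplicative.ofAdd x)).2
  have hzero := aux_iota_zero ι hadd
  have hfinG : Finite (Γ ⧸ L) := Nat.finite_of_card_ne_zero (by omega)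
  obtain ⟨g, hg⟩ := IsCyclic.exists_monoid_generator (α := Γ ⧸ L)
  obtain ⟨t, rfl⟩ := QuotientGroup.mk'_surjective L g
  have hord : orderOf (QuotientGroup.mk' L t) = m := by
    rw [← hcard]
    apply orderOf_eq_card_of_forall_mem_zpowers
    intro x
    obtain ⟨k, hk⟩ := hg x
    exact ⟨k, by simpa using hk⟩
  have ht : ∀ k : ℕ, t^k ∈ L ↔ m ∣ k := by
    intro k
    rw [← hord, orderOf_dvd_iff_pow_eq_one, ← map_pow]
    exact (QuotientGroup.eq_one_iff _).symm
  have hgen : ∀ γ : Γ, ∃ x : Fin n → ℤ, ∃ k : ℕ, γ = ι x * t^k := by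
    intro γ
    obtain ⟨k, hk⟩ := hg (QuotientGroup.mk' L γ)
    simp only at hk
    rw [← map_pow, eq_comm, aux_pi_eq, hrange] at hk
    obtain ⟨x, hx⟩ := hk
    exact ⟨x, k, by rw [hx]; simp⟩
  -- the automorphism induced by conjugation with `t`
  have hTex : ∀ x, ∃ y, ι y = t * ι x * t⁻¹ := by
    intro x
    rw [← hrange]
    exact Subgroup.Normal.conj_mem inferInstance _ ((hrange _).2 ⟨x, rfl⟩) t
  choose T0 hT0 using hTex
  let T : Module.End ℤ (Fin n → ℤ) := (AddMonoidHom.mk' T0 (by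
    intro x y
    apply hinj
    rw [hT0, hadd, hadd, hT0, hT0]; group)).toIntLinearMap
  have hT : ∀ x, ι (T x) = t * ι x * t⁻¹ := hT0
  have hTm : T ^ m = 1 := by
    refine LinearMap.ext fun x => hinj ?_
    rw [aux_T_pow ι t T hT]
    obtain ⟨y, hy⟩ := (hrange _).1 ((ht m).2 dvd_rfl)
    rw [← hy, mul_inv_eq_iff_eq_mul, ← hadd, Module.End.one_apply, ← hadd, add_comm]
  have hTfree : ∀ k, ¬ m ∣ k → ∀ x, (T^k) x = x → x = 0 := by
    intro k hk x hx
    by_contra hne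
    refine hfree (t^k) (by rwa [ht]) (ι x) ((hrange _).2 ⟨x, rfl⟩) ?_ ?_
    · rw [← hzero]; exact fun h => hne (hinj h)
    · rw [← aux_T_pow ι t T hT, hx]
  have htf : ∀ K : Subgroup Γ, (K : Set Γ).Finite → ∀ g ∈ K, g ∈ L → g = 1 := by
    intro K hK g hgK hgL
    obtain ⟨x, rfl⟩ := (hrange _).1 hgL
    have hKf : Finite K := hK
    have h1 : (⟨ι x, hgK⟩ : K) ^ Nat.card K = 1 := pow_card_eq_one'
    have h2 : ι x ^ Nat.card K = 1 := congrArg Subtype.val h1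
    have h3 : ∀ N : ℕ, ι (N • x) = ι x ^ N := by
      intro N
      induction N with
      | zero => simp [hzero]
      | succ N ih => rw [succ_nsmul, hadd, ih, pow_succ]
    rw [← h3, ← hzero] at h2
    have h4 := hinj h2
    rcases smul_eq_zero.1 h4 with h5 | h5
    · exact absurd h5 (Nat.card_pos).ne'
    · rw [h5, hzero]
  obtain ⟨j, rfl⟩ : ∃ j', j = j' + 1 := ⟨j - 1, by omega⟩
  have hqm : p i ^ (j+1) ∣ m := by
    rw [← hCcard, ← hcard]; exact Subgroup.card_subgroup_dvd_card C
  obtain ⟨a, ha⟩ := hqm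
  rw [mul_comm] at ha
  have hq : 1 < p i ^ (j+1) := Nat.one_lt_pow (Nat.succ_ne_zero j) (hp i).one_lt
  have ha0 : 0 < a := Nat.pos_of_ne_zero (by rintro rfl; omega)
  have hC : C = Subgroup.zpowers ((QuotientGroup.mk' L t)^a) := by
    have hle : C ≤ Subgroup.zpowers ((QuotientGroup.mk' L t)^a) := by
      intro x hx
      obtain ⟨b, hb⟩ := hg x
      simp only at hb
      have h1 : (⟨x, hx⟩ : C) ^ Nat.card C = 1 := pow_card_eq_one'
      have h2 : x ^ Nat.card C = 1 := congrArg Subtype.val h1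
      rw [hCcard, ← hb, ← pow_mul, ← orderOf_dvd_iff_pow_eq_one, hord, ha] at h2
      obtain ⟨e, rfl⟩ := Nat.dvd_of_mul_dvd_mul_right (by omega) h2
      exact ⟨e, by rw [← hb, pow_mul]; simp⟩
    apply Subgroup.eq_of_le_of_card_ge hle
    rw [Nat.card_zpowers, hCcard]
    apply Nat.le_of_dvd (by omega)
    rw [orderOf_dvd_iff_pow_eq_one, ← pow_mul, ← ha, ← hord, pow_orderOf_eq_one]
  have ha1 : a ≠ 1 := by
    rintro rfl
    apply hCne
    rw [hC, eq_top_iff]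
    intro x _
    obtain ⟨b, hb⟩ := hg x
    exact ⟨b, by simpa using hb⟩
  -- divisibility of `a` by `p i`
  have hfac : ∃ e, m = p i ^ r i * e ∧ ¬ p i ∣ e := by
    refine ⟨∏ l ∈ Finset.univ.erase i, p l ^ r l, ?_, ?_⟩
    · rw [hmprod]; exact (Finset.mul_prod_erase Finset.univ (fun l => p l ^ r l) (Finset.mem_univ i)).symm
    · intro hd
      obtain ⟨l, hl, hdl⟩ := (Prime.dvd_finset_prod_iff (hp i).prime _).1 hd
      have h1 := (Nat.prime_dvd_prime_iff_eq (hp i) (hp l)).1 ((hp i).dvd_of_dvd_pow hdl)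
      exact (Finset.ne_of_mem_erase hl) (hpinj h1.symm)
  obtain ⟨e, hme, hpe⟩ := hfac
  obtain ⟨d, hd⟩ := Nat.exists_eq_add_of_le hjr
  have hae : a = p i ^ d * e := by
    have : a * p i ^ (j+1) = (p i ^ d * e) * p i ^ (j+1) := by
      rw [← ha, hme, hd, pow_add]; ring
    exact Nat.eq_of_mul_eq_mul_right (by omega) this
  have hstab : LinearMap.range (T^a - 1) ≤ (LinearMap.range (T^a - 1)).comap T := by
    rintro _ ⟨y, rfl⟩
    refine ⟨T y, ?_⟩
    have : (T^a - 1) * T = T * (T^a - 1) := by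
      rw [sub_mul, mul_sub, ← pow_succ, ← pow_succ']; simp
    exact LinearMap.congr_fun this y
  let σ : Module.End ℤ ((Fin n → ℤ) ⧸ LinearMap.range (T^a - 1)) := Submodule.mapQ _ _ T hstab
  have hσ : ∀ x, σ (Submodule.Quotient.mk x) = Submodule.Quotient.mk (T x) := fun x => rfl
  obtain ⟨hfinM, hc1, hc2⟩ := aux_count1 T a σ hσ m hm hTm hTfree (p i) j (r i) kI (hp i) ha hjr
    (by rw [← hkI]; simp)
  obtain ⟨hfinQ, hcardQ⟩ := aux_group_main L ι hadd hinj hrange t T hT a σ hσ hcyc hfree htf m hm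
    hgen ht _ ha hq C hC
  refine ⟨hfinQ, ?_, ?_⟩
  · intro hj
    have hd0 : d = 0 := by omega
    rw [hd0, pow_zero, one_mul] at hae
    have := hc1 hj (by rw [hae]; exact hpe) ha1
    rw [ha, ← mul_assoc, ← hcardQ, this, hj]
  · intro hj
    obtain ⟨d, rfl⟩ : ∃ d', d = d' + 1 := ⟨d - 1, by have := hr i; omega⟩
    have := hc2 (by omega) (by rw [hae, pow_succ]; exact ⟨p i ^ d * e, by ring⟩)
    rw [ha, ← mul_assoc, ← hcardQ, this, Nat.sub_mul, ← pow_add, ← pow_add]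
end

section
/- The set ℳ of Γ-conjugacy classes of maximal finite subgroups of Γ is finite, and for a maximal finite subgroup M the subgroup π(M) ⊆ G depends only on the conjugacy class of M (since G is abelian). Let ρ : G → GL(L ⊗_ℤ ℚ) be the induced rational representation. Then for every g ∈ G with g ≠ 1: det( id − ρ(g) : L ⊗_ℤ ℚ → L ⊗_ℤ ℚ ) = Σ_{(M) ∈ ℳ, g ∈ π(M)} [G : π(M)]. -/
open scoped TensorProduct Classical

/-- The set `ℳ` of `Γ`-conjugacy classes of (non-trivial) maximal finite subgroups of `Γ`. -/
def MaxFinClasses (Γ : Type*) [Group Γ] : Type _ :=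
  Quot fun H K : {H : Subgroup Γ // IsMaxFin Γ H ∧ H ≠ ⊥} => SubConj Γ H.1 K.1

theorem aux_subConj_equiv (Γ : Type*) [Group Γ] :
    Equivalence (fun H K : {H : Subgroup Γ // IsMaxFin Γ H ∧ H ≠ ⊥} => SubConj Γ H.1 K.1) := by
  refine ⟨fun H => ⟨1, ?_⟩, ?_, ?_⟩
  · ext x; simp
  · rintro H K ⟨γ, h⟩
    refine ⟨γ⁻¹, ?_⟩
    rw [h, Subgroup.map_map]
    ext x; simp [mul_assoc]
  · rintro H K M ⟨γ, h⟩ ⟨δ, h'⟩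
    refine ⟨δ * γ, ?_⟩
    rw [h', h, Subgroup.map_map]
    congr 1
    ext x; simp [mul_assoc]

theorem aux_quot_eq {Γ : Type*} [Group Γ] {H K : {H : Subgroup Γ // IsMaxFin Γ H ∧ H ≠ ⊥}} :
    (Quot.mk _ H : MaxFinClasses Γ) = Quot.mk _ K ↔ SubConj Γ H.1 K.1 := by
  constructor
  · intro h
    exact (aux_subConj_equiv Γ).eqvGen_iff.1 (Quot.eqvGen_exact h)
  · intro h
    exact Quot.sound h

theorem aux_conj_cent {Γ : Type*} [Group Γ] (δ γ : Γ) :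
    Subgroup.map (MulAut.conj δ).toMonoidHom (Subgroup.centralizer {γ}) =
      Subgroup.centralizer {δ * γ * δ⁻¹} := by
  ext x
  simp only [Subgroup.mem_map, Subgroup.mem_centralizer_singleton_iff]
  constructor
  · rintro ⟨y, hy, rfl⟩
    simp only [MulEquiv.coe_toMonoidHom, MulAut.conj_apply]
    calc _ = δ * (y * γ) * δ⁻¹ := by group
      _ = _ := by rw [hy]; group
  · intro h
    refine ⟨δ⁻¹ * x * δ, ?_, by simp [mul_assoc]⟩
    have h2 := congrArg (fun t => δ⁻¹ * t * δ) h
    simpa [mul_assoc] using h2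

theorem aux_card_s19 {X Y Z : Type*} (f : X → Y) (h : X → Z) (hf : Function.Surjective f)
    (hh : Function.Surjective h) (H : ∀ x x', f x = f x' ↔ h x = h x') : Nonempty (Y ≃ Z) := by
  refine ⟨Equiv.ofBijective (fun y => h (Function.surjInv hf y)) ⟨?_, ?_⟩⟩
  · intro y y' hy
    have := (H _ _).2 hy
    rwa [Function.surjInv_eq hf, Function.surjInv_eq hf] at this
  · intro z
    obtain ⟨x, rfl⟩ := hh z
    exact ⟨f x, (H _ _).1 (Function.surjInv_eq hf _)⟩

set_option linter.unusedSectionVars false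
section core
variable {Γ : Type*} [Group Γ] (L : Subgroup Γ) [L.Normal]

/-- L-conjugacy on lifts of g. -/
def auxSetoid (g : Γ ⧸ L) : Setoid {γ : Γ // (γ : Γ ⧸ L) = g} where
  r a b := ∃ l ∈ L, l * a.1 * l⁻¹ = b.1
  iseqv := by
    refine ⟨fun a => ⟨1, L.one_mem, by simp⟩, ?_, ?_⟩
    · rintro a b ⟨l, hl, h⟩
      exact ⟨l⁻¹, L.inv_mem hl, by rw [← h]; group⟩
    · rintro a b c ⟨l, hl, h⟩ ⟨k, hk, h'⟩
      exact ⟨k * l, L.mul_mem hk hl, by rw [← h', ← h]; group⟩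

variable (hcomm : ∀ a b : Γ ⧸ L, a * b = b * a) [Finite (Γ ⧸ L)]
  (tors : ∀ l ∈ L, IsOfFinOrder l → l = 1)
  (free : ∀ γ ∉ L, ∀ l ∈ L, l * γ = γ * l → l = 1)

theorem aux_le_cent (hcomm : ∀ a b : Γ ⧸ L, a * b = b * a)
    (tors : ∀ l ∈ L, IsOfFinOrder l → l = 1)
    (K : Subgroup Γ) (hK : (K : Set Γ).Finite) (γ : Γ) (h : γ ∈ K) :
    K ≤ Subgroup.centralizer {γ} := by
  intro k hk
  rw [Subgroup.mem_centralizer_singleton_iff]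
  have h1 : k * γ * k⁻¹ * γ⁻¹ ∈ L := by
    rw [← QuotientGroup.eq_one_iff]
    simp only [QuotientGroup.mk_mul, QuotientGroup.mk_inv]
    rw [hcomm (k : Γ ⧸ L) γ]
    group
  have h2 : k * γ * k⁻¹ * γ⁻¹ ∈ K :=
    K.mul_mem (K.mul_mem (K.mul_mem hk h) (K.inv_mem hk)) (K.inv_mem h)
  have : Finite K := hK
  have h3 : IsOfFinOrder (k * γ * k⁻¹ * γ⁻¹) := by
    have := isOfFinOrder_of_finite (⟨_, h2⟩ : K)
    exact (Subgroup.subtype K).isOfFinOrder this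
  have h4 := tors _ h1 h3
  rwa [mul_inv_eq_one, mul_inv_eq_iff_eq_mul] at h4

theorem aux_cent_fin (free : ∀ γ ∉ L, ∀ l ∈ L, l * γ = γ * l → l = 1)
    (γ : Γ) (h : γ ∉ L) : (Subgroup.centralizer {γ} : Set Γ).Finite := by
  refine Set.Finite.of_finite_image (f := (QuotientGroup.mk : Γ → Γ ⧸ L)) (Set.toFinite _) ?_
  intro a ha b hb hab
  have hab' : a⁻¹ * b ∈ L := QuotientGroup.eq.1 hab
  have h1 : a⁻¹ * b ∈ Subgroup.centralizer {γ} := Subgroup.mul_mem _ (Subgroup.inv_mem _ ha) hb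
  have := free γ h _ hab' (Subgroup.mem_centralizer_singleton_iff.1 h1)
  exact (inv_mul_eq_one.1 this)

theorem aux_cent_max (hcomm : ∀ a b : Γ ⧸ L, a * b = b * a)
    (tors : ∀ l ∈ L, IsOfFinOrder l → l = 1)
    (free : ∀ γ ∉ L, ∀ l ∈ L, l * γ = γ * l → l = 1)
    (γ : Γ) (h : γ ∉ L) :
    IsMaxFin Γ (Subgroup.centralizer {γ}) ∧ Subgroup.centralizer {γ} ≠ ⊥ := by
  have hm : γ ∈ Subgroup.centralizer {γ} := Subgroup.mem_centralizer_singleton_iff.2 rfl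
  refine ⟨⟨aux_cent_fin L free γ h, fun K hK hle => ?_⟩, ?_⟩
  · exact le_antisymm hle (aux_le_cent L hcomm tors K hK γ (hle hm))
  · intro hb
    rw [hb, Subgroup.mem_bot] at hm
    exact h (hm ▸ L.one_mem)

theorem aux_max_eq (hcomm : ∀ a b : Γ ⧸ L, a * b = b * a)
    (tors : ∀ l ∈ L, IsOfFinOrder l → l = 1)
    (free : ∀ γ ∉ L, ∀ l ∈ L, l * γ = γ * l → l = 1)
    (M : Subgroup Γ) (hM : IsMaxFin Γ M) (γ : Γ) (h : γ ∉ L) (hγ : γ ∈ M) :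
    M = Subgroup.centralizer {γ} :=
  hM.2 _ (aux_cent_fin L free γ h) (aux_le_cent L hcomm tors M hM.1 γ hγ)

theorem aux_exists (tors : ∀ l ∈ L, IsOfFinOrder l → l = 1)
    (M : Subgroup Γ) (hM : IsMaxFin Γ M ∧ M ≠ ⊥) : ∃ γ ∈ M, γ ∉ L := by
  obtain ⟨γ, hγ, h1⟩ := M.bot_or_exists_ne_one.resolve_left hM.2
  refine ⟨γ, hγ, fun hL => h1 (tors γ hL ?_)⟩
  have : Finite M := hM.1.1
  exact (Subgroup.subtype M).isOfFinOrder (isOfFinOrder_of_finite (⟨γ, hγ⟩ : M))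

theorem aux_conj_map (hcomm : ∀ a b : Γ ⧸ L, a * b = b * a)
    (H K : Subgroup Γ) (h : SubConj Γ H K) :
    Subgroup.map (QuotientGroup.mk' L) H = Subgroup.map (QuotientGroup.mk' L) K := by
  obtain ⟨γ, rfl⟩ := h
  rw [Subgroup.map_map]
  congr 1
  ext x
  simp only [QuotientGroup.mk'_apply, MonoidHom.comp_apply, MulEquiv.coe_toMonoidHom,
    MulAut.conj_apply, QuotientGroup.mk_mul, QuotientGroup.mk_inv]
  rw [hcomm (γ : Γ ⧸ L) x]
  group

theorem aux_not_mem {g : Γ ⧸ L} (hg : g ≠ 1) (γ : Γ) (h : (γ : Γ ⧸ L) = g) : γ ∉ L := by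
  rw [← QuotientGroup.eq_one_iff, h]; exact hg

/-- class of the centralizer -/
noncomputable def auxPhi0 {g : Γ ⧸ L} (hg : g ≠ 1) (γ : {γ : Γ // (γ : Γ ⧸ L) = g}) :
    MaxFinClasses Γ :=
  Quot.mk _ ⟨Subgroup.centralizer {γ.1},
    aux_cent_max L hcomm tors free γ.1 (aux_not_mem L hg γ.1 γ.2)⟩

noncomputable def auxPhi {g : Γ ⧸ L} (hg : g ≠ 1) : Quotient (auxSetoid L g) → MaxFinClasses Γ :=
  Quotient.lift (auxPhi0 L hcomm tors free hg) (by
    rintro a b ⟨l, hl, h⟩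
    refine Quot.sound ⟨l, ?_⟩
    simp only
    rw [aux_conj_cent, h])

theorem aux_mem_image {g : Γ ⧸ L} (γ : {γ : Γ // (γ : Γ ⧸ L) = g}) :
    g ∈ Subgroup.map (QuotientGroup.mk' L) (Subgroup.centralizer {γ.1}) :=
  ⟨γ.1, Subgroup.mem_centralizer_singleton_iff.2 rfl, γ.2⟩

theorem aux_finite (hcomm : ∀ a b : Γ ⧸ L, a * b = b * a)
    (tors : ∀ l ∈ L, IsOfFinOrder l → l = 1)
    (free : ∀ γ ∉ L, ∀ l ∈ L, l * γ = γ * l → l = 1)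
    (hfin : ∀ g : Γ ⧸ L, g ≠ 1 → Finite (Quotient (auxSetoid L g))) :
    Finite (MaxFinClasses Γ) := by
  have : ∀ g : {g : Γ ⧸ L // g ≠ 1}, Finite (Quotient (auxSetoid L g.1)) := fun g => hfin g.1 g.2
  refine Finite.of_surjective
    (fun p : Σ g : {g : Γ ⧸ L // g ≠ 1}, Quotient (auxSetoid L g.1) =>
      auxPhi L hcomm tors free p.1.2 p.2) ?_
  rintro ⟨M⟩
  obtain ⟨γ, hγ, hL⟩ := aux_exists L tors M.1 M.2
  refine ⟨⟨⟨(γ : Γ ⧸ L), fun h => hL ((QuotientGroup.eq_one_iff γ).1 h)⟩,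
    Quotient.mk (auxSetoid L γ) ⟨γ, rfl⟩⟩, ?_⟩
  show Quot.mk _ _ = Quot.mk _ _
  congr 1
  exact Subtype.ext (aux_max_eq L hcomm tors free M.1 M.2.1 γ hL hγ).symm

theorem aux_fibre {g : Γ ⧸ L} (hg : g ≠ 1) (H : {H : Subgroup Γ // IsMaxFin Γ H ∧ H ≠ ⊥}) :
    Nat.card {q : Quotient (auxSetoid L g) // auxPhi L hcomm tors free hg q = Quot.mk _ H} =
      if g ∈ Subgroup.map (QuotientGroup.mk' L) H.1 then
              (Subgroup.map (QuotientGroup.mk' L) H.1).index else 0 := by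
  split_ifs with hgH
  · obtain ⟨γ, hγ, hγg⟩ := hgH
    have hγg' : (γ : Γ ⧸ L) = g := hγg
    have hHC := aux_max_eq L hcomm tors free H.1 H.2.1 γ (aux_not_mem L hg γ hγg') hγ
    have hlift : ∀ δ : Γ, ((δ * γ * δ⁻¹ : Γ) : Γ ⧸ L) = g := by
      intro δ
      simp only [QuotientGroup.mk_mul, QuotientGroup.mk_inv]
      rw [hcomm (δ : Γ ⧸ L) γ, hγg']
      group
    refine Nat.card_congr (Classical.choice (aux_card_s19
      (X := Γ)
      (fun δ => ⟨Quotient.mk (auxSetoid L g) ⟨δ * γ * δ⁻¹, hlift δ⟩, ?_⟩)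
      (fun δ => ((δ : Γ ⧸ L) : (Γ ⧸ L) ⧸ (Subgroup.map (QuotientGroup.mk' L) H.1)))
      ?_ ?_ ?_))
    · refine (aux_quot_eq.2 ⟨δ, ?_⟩).symm
      simp only
      rw [hHC, aux_conj_cent]
    · rintro ⟨⟨a⟩, ha⟩
      obtain ⟨δ, hδ⟩ := aux_quot_eq.1 ha.symm
      simp only at hδ
      rw [hHC, aux_conj_cent] at hδ
      refine ⟨δ, Subtype.ext ?_⟩
      show Quotient.mk (auxSetoid L g) _ = Quotient.mk (auxSetoid L g) _
      congr 1
      apply Subtype.ext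
      simp only
      have hn := aux_not_mem L hg a.1 a.2
      have h1 : δ * γ * δ⁻¹ ∈ Subgroup.centralizer {a.1} := by
        rw [hδ]; exact Subgroup.mem_centralizer_singleton_iff.2 rfl
      have h2 : a.1 ∈ Subgroup.centralizer {a.1} := Subgroup.mem_centralizer_singleton_iff.2 rfl
      have h3 := Subgroup.mul_mem _ (Subgroup.inv_mem _ h1) h2
      have h4 : (δ * γ * δ⁻¹)⁻¹ * a.1 ∈ L := QuotientGroup.eq.1 ((hlift δ).trans a.2.symm)
      exact inv_mul_eq_one.1 (free _ hn _ h4 (Subgroup.mem_centralizer_singleton_iff.1 h3))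
    · intro x
      obtain ⟨y, rfl⟩ := QuotientGroup.mk_surjective x
      obtain ⟨z, rfl⟩ := QuotientGroup.mk_surjective y
      exact ⟨z, rfl⟩
    · intro δ δ'
      refine Subtype.ext_iff.trans (Quotient.eq.trans ?_)
      rw [QuotientGroup.eq]
      constructor
      · rintro ⟨l, hl, h⟩
        simp only at h
        refine ⟨δ⁻¹ * l⁻¹ * δ', ?_, ?_⟩
        · rw [hHC]
          refine Subgroup.mem_centralizer_singleton_iff.2 ?_
          have h' : δ' * γ = l * (δ * γ * δ⁻¹) * l⁻¹ * δ' := by rw [h]; group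
          calc _ = δ⁻¹ * l⁻¹ * (δ' * γ) := by group
            _ = _ := by rw [h']; group
        · have : (l : Γ ⧸ L) = 1 := (QuotientGroup.eq_one_iff l).2 hl
          simp [this]
      · rintro ⟨c, hc, h⟩
        have hc' : c * γ = γ * c := by
          have := hHC ▸ hc
          exact Subgroup.mem_centralizer_singleton_iff.1 this
        refine ⟨δ' * c⁻¹ * δ⁻¹, ?_, ?_⟩
        · rw [← QuotientGroup.eq_one_iff]
          have h' : (c : Γ ⧸ L) = (δ : Γ ⧸ L)⁻¹ * δ' := h
          simp only [QuotientGroup.mk_mul, QuotientGroup.mk_inv]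
          rw [h']; group
        · simp only
          have h5 : γ = c⁻¹ * γ * c := by rw [mul_assoc, ← hc']; group
          calc _ = δ' * (c⁻¹ * γ * c) * δ'⁻¹ := by group
            _ = _ := by rw [← h5]
  · rw [Nat.card_eq_zero]
    left
    refine ⟨?_⟩
    rintro ⟨⟨a⟩, ha⟩
    have h1 := aux_conj_map L hcomm _ _ (aux_quot_eq.1 ha)
    exact hgH (h1 ▸ aux_mem_image L a)

theorem aux_sum (hcomm : ∀ a b : Γ ⧸ L, a * b = b * a)
    (tors : ∀ l ∈ L, IsOfFinOrder l → l = 1)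
    (free : ∀ γ ∉ L, ∀ l ∈ L, l * γ = γ * l → l = 1)
    (hfin : Finite (MaxFinClasses Γ)) {g : Γ ⧸ L} (hg : g ≠ 1)
    (hq : Finite (Quotient (auxSetoid L g)))
    (F : MaxFinClasses Γ → ℚ)
    (hF : ∀ H : {H : Subgroup Γ // IsMaxFin Γ H ∧ H ≠ ⊥},
          F (Quot.mk _ H) =
            if g ∈ Subgroup.map (QuotientGroup.mk' L) H.1 then
              ((Subgroup.map (QuotientGroup.mk' L) H.1).index : ℚ)
            else 0) :
    ∑ᶠ x, F x = Nat.card (Quotient (auxSetoid L g)) := by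
  have := Fintype.ofFinite (MaxFinClasses Γ)
  rw [finsum_eq_sum_of_fintype,
    ← Nat.card_congr (Equiv.sigmaFiberEquiv (auxPhi L hcomm tors free hg)), Nat.card_sigma]
  push_cast
  refine Finset.sum_congr rfl ?_
  rintro ⟨H⟩ -
  refine (hF H).trans ?_
  have := aux_fibre L hcomm tors free hg H
  refine Eq.trans ?_ (congrArg (Nat.cast (R := ℚ)) this).symm
  split_ifs <;> simp
end core

theorem aux_card_det {n : ℕ} (A : (Fin n → ℤ) →ₗ[ℤ] (Fin n → ℤ)) (hA : Function.Injective A) :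
    Nat.card ((Fin n → ℤ) ⧸ LinearMap.range A) = (LinearMap.det A).natAbs := by
  have := Submodule.natAbs_det_equiv (LinearMap.range A) (LinearEquiv.ofInjective A hA)
  rw [← this]
  congr 2

theorem aux_det_ne {n : ℕ} (A : (Fin n → ℤ) →ₗ[ℤ] (Fin n → ℤ)) (hA : Function.Injective A) :
    LinearMap.det A ≠ 0 := by
  intro h
  rw [← LinearMap.det_toMatrix', ← Matrix.exists_mulVec_eq_zero_iff] at h
  obtain ⟨v, hv, h⟩ := h
  rw [LinearMap.toMatrix'_mulVec] at h
  exact hv (hA (h.trans (map_zero A).symm))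

theorem aux_finite_quot {n : ℕ} (A : (Fin n → ℤ) →ₗ[ℤ] (Fin n → ℤ)) (hA : Function.Injective A) :
    Finite ((Fin n → ℤ) ⧸ LinearMap.range A) := by
  apply Nat.finite_of_card_ne_zero
  rw [aux_card_det A hA]
  simpa using aux_det_ne A hA

theorem aux_det_pos {n d : ℕ} (hd : d ≠ 0) (B : (Fin n → ℤ) →ₗ[ℤ] (Fin n → ℤ)) (hB : B ^ d = 1)
    (hA : Function.Injective (LinearMap.id - B : (Fin n → ℤ) →ₗ[ℤ] (Fin n → ℤ))) :
    0 < LinearMap.det (LinearMap.id - B) := by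
  have hne := aux_det_ne _ hA
  set C : Matrix (Fin n) (Fin n) ℝ := (LinearMap.toMatrix' B).map (Int.castRingHom ℝ) with hC
  have hCd : C ^ d = 1 := by
    rw [hC]
    have : (LinearMap.toMatrix' B) ^ d = 1 := by
      have := congrArg LinearMap.toMatrixAlgEquiv' hB
      rw [map_pow, map_one] at this
      exact this
    have h2 := congrArg (fun M : Matrix (Fin n) (Fin n) ℤ => (Int.castRingHom ℝ).mapMatrix M) this
    simp only [map_pow, map_one] at h2
    exact h2
  have hdet : ((LinearMap.det (LinearMap.id - B) : ℤ) : ℝ) = (1 - (1 : ℝ) • C).det := by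
    rw [← LinearMap.det_toMatrix', map_sub, LinearMap.toMatrix'_id, one_smul]
    have := RingHom.map_det (Int.castRingHom ℝ) (1 - LinearMap.toMatrix' B)
    rw [map_sub, map_one] at this
    exact this
  have hcont : Continuous fun t : ℝ => (1 - t • C).det := by
    apply Continuous.matrix_det
    fun_prop
  have key : ∀ t ∈ Set.Icc (0 : ℝ) 1, (1 - t • C).det ≠ 0 := by
    rintro t ⟨h0, h1⟩
    rcases h1.lt_or_eq with h1 | rfl
    · intro hz
      have h := mul_neg_geom_sum (t • C) d
      have h' := congrArg Matrix.det h
      rw [Matrix.det_mul, hz, zero_mul, smul_pow, hCd] at h'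
      have : (1 - t ^ d • (1 : Matrix (Fin n) (Fin n) ℝ)) = (1 - t ^ d) • 1 := by
        rw [sub_smul, one_smul]
      rw [this, Matrix.det_smul, Matrix.det_one, mul_one] at h'
      have := pow_lt_one₀ h0 h1 hd
      exact (pow_ne_zero _ (by linarith)) h'.symm
    · rw [← hdet]
      exact_mod_cast hne
  have hpos : 0 < (1 - (1 : ℝ) • C).det := by
    by_contra hneg
    have := intermediate_value_Icc' (zero_le_one (α := ℝ)) hcont.continuousOn
    obtain ⟨t, ht, h⟩ := this ⟨not_lt.1 hneg, by simp⟩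
    exact key t ht h
  rw [← hdet] at hpos
  exact_mod_cast hpos


theorem aux_link {n : ℕ} {Γ : Type*} [Group Γ] (L : Subgroup Γ) [L.Normal]
    (ι : (Fin n → ℤ) → Γ) (hadd : ∀ x y, ι (x + y) = ι x * ι y) (hinj : Function.Injective ι)
    (hrange : ∀ γ, γ ∈ L ↔ ∃ x, ι x = γ) (ρ : Representation ℤ (Γ ⧸ L) (Fin n → ℤ))
    (hconj : ∀ (γ : Γ) x, γ * ι x * γ⁻¹ = ι (ρ (γ : Γ ⧸ L) x)) (g : Γ ⧸ L) :
    Nonempty (((Fin n → ℤ) ⧸ LinearMap.range (LinearMap.id - ρ g)) ≃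
      Quotient (auxSetoid L g)) := by
  obtain ⟨γ, rfl⟩ := QuotientGroup.mk_surjective g
  have h0 : ι 0 = 1 := by
    have := hadd 0 0
    rwa [add_zero, left_eq_mul] at this
  have hneg : ∀ x, ι (-x) = (ι x)⁻¹ := by
    intro x
    rw [eq_inv_iff_mul_eq_one, ← hadd, neg_add_cancel, h0]
  have hmem : ∀ x, ι x ∈ L := fun x => (hrange _).2 ⟨x, rfl⟩
  have hlift : ∀ x, ((ι x * γ : Γ) : Γ ⧸ L) = (γ : Γ ⧸ L) := by
    intro x
    rw [QuotientGroup.mk_mul, (QuotientGroup.eq_one_iff _).2 (hmem x), one_mul]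
  have key : ∀ y x, ι y * (ι x * γ) * (ι y)⁻¹ = ι (x + (y - ρ (γ : Γ ⧸ L) y)) * γ := by
    intro y x
    have h1 : x + (y - ρ (γ : Γ ⧸ L) y) = y + x + ρ (γ : Γ ⧸ L) (-y) := by
      rw [map_neg]; abel
    rw [h1, hadd, hadd, ← hconj, hneg]
    group
  refine aux_card_s19 (X := Fin n → ℤ) (fun x => Submodule.Quotient.mk x)
    (fun x => Quotient.mk (auxSetoid L γ) ⟨ι x * γ, hlift x⟩)
    (Submodule.Quotient.mk_surjective _) ?_ ?_
  · rintro ⟨δ, hδ⟩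
    have : δ * γ⁻¹ ∈ L := by
      rw [← QuotientGroup.eq_one_iff, QuotientGroup.mk_mul, hδ, ← QuotientGroup.mk_mul]; simp
    obtain ⟨x, hx⟩ := (hrange _).1 this
    refine ⟨x, ?_⟩
    show Quotient.mk (auxSetoid L γ) _ = Quotient.mk (auxSetoid L γ) _
    congr 1
    exact Subtype.ext (by simp [hx])
  · intro x x'
    rw [eq_comm]
    refine (Submodule.Quotient.eq _).trans (Iff.trans ?_ Quotient.eq.symm)
    constructor
    · rintro ⟨y, hy⟩
      refine ⟨ι y, hmem y, ?_⟩
      have hy' : y - ρ (γ : Γ ⧸ L) y = x' - x := hy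
      show ι y * (ι x * γ) * (ι y)⁻¹ = ι x' * γ
      rw [key, hy']
      simp
    · rintro ⟨l, hl, h⟩
      obtain ⟨y, rfl⟩ := (hrange _).1 hl
      have h' : ι y * (ι x * γ) * (ι y)⁻¹ = ι x' * γ := h
      rw [key] at h'
      have h2 := hinj (mul_right_cancel h')
      refine ⟨y, ?_⟩
      show y - ρ (γ : Γ ⧸ L) y = x' - x
      rw [← h2]; abel

/-- In the setting of the paper (`L ≅ ℤⁿ` normal in `Γ`, `G = Γ/L` cyclic of order `m`, the
conjugation action of `G` on `L` — given by the representation `ρ` via the identification `e` —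
free outside the origin), the set `ℳ` of conjugacy classes of maximal finite subgroups is finite,
`π(M)` only depends on the conjugacy class of `M`, and for every `g ∈ G`, `g ≠ 1`, the
determinant of `id − ρ(g)` on `L ⊗ ℚ` equals `Σ_{(M) ∈ ℳ, g ∈ π(M)} [G : π(M)]`. -/
theorem statement19 (n m : ℕ) (hn : 1 ≤ n) (hm : 1 ≤ m)
    (Γ : Type*) [Group Γ] (L : Subgroup Γ) [hN : L.Normal]
    (e : L ≃* Multiplicative (Fin n → ℤ))
    (hcyc : IsCyclic (Γ ⧸ L)) (hcard : Nat.card (Γ ⧸ L) = m)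
    (ρ : Representation ℤ (Γ ⧸ L) (Fin n → ℤ))
    (hρ : ∀ (γ : Γ) (x : L),
      e ⟨γ * (x : Γ) * γ⁻¹, hN.conj_mem (x : Γ) x.2 γ⟩ =
        Multiplicative.ofAdd (ρ ((γ : Γ ⧸ L)) (Multiplicative.toAdd (e x))))
    (hfree : ∀ g : Γ ⧸ L, g ≠ 1 → ∀ x : Fin n → ℤ, x ≠ 0 → ρ g x ≠ x) :
    Finite (MaxFinClasses Γ) ∧
    (∀ H K : {H : Subgroup Γ // IsMaxFin Γ H ∧ H ≠ ⊥}, SubConj Γ H.1 K.1 →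
      Subgroup.map (QuotientGroup.mk' L) H.1 = Subgroup.map (QuotientGroup.mk' L) K.1) ∧
    ∀ g : Γ ⧸ L, g ≠ 1 →
      ∀ F : MaxFinClasses Γ → ℚ,
        (∀ H : {H : Subgroup Γ // IsMaxFin Γ H ∧ H ≠ ⊥},
          F (Quot.mk _ H) =
            if g ∈ Subgroup.map (QuotientGroup.mk' L) H.1 then
              ((Subgroup.map (QuotientGroup.mk' L) H.1).index : ℚ)
            else 0) →
        LinearMap.det
            (LinearMap.id - LinearMap.baseChange ℚ (ρ g) :
              ℚ ⊗[ℤ] (Fin n → ℤ) →ₗ[ℚ] ℚ ⊗[ℤ] (Fin n → ℤ)) =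
          ∑ᶠ x : MaxFinClasses Γ, F x := by
  have : Finite (Γ ⧸ L) := Nat.finite_of_card_ne_zero (by omega)
  have hcomm : ∀ a b : Γ ⧸ L, a * b = b * a := fun a b => by
    let _ := IsCyclic.commGroup (α := Γ ⧸ L)
    exact mul_comm a b
  let ι : (Fin n → ℤ) → Γ := fun x => (e.symm (Multiplicative.ofAdd x) : Γ)
  have hadd : ∀ x y, ι (x + y) = ι x * ι y := by
    intro x y
    simp [ι, ofAdd_add]
  have hinj : Function.Injective ι := by
    intro x y h
    exact Multiplicative.ofAdd.injective (e.symm.injective (Subtype.ext h))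
  have hrange : ∀ γ, γ ∈ L ↔ ∃ x, ι x = γ := by
    intro γ
    constructor
    · intro h
      exact ⟨Multiplicative.toAdd (e ⟨γ, h⟩), by simp [ι]⟩
    · rintro ⟨x, rfl⟩
      exact (e.symm (Multiplicative.ofAdd x)).2
  have hconj : ∀ (γ : Γ) x, γ * ι x * γ⁻¹ = ι (ρ (γ : Γ ⧸ L) x) := by
    intro γ x
    have := hρ γ (e.symm (Multiplicative.ofAdd x))
    rw [MulEquiv.apply_symm_apply, toAdd_ofAdd] at this
    show _ = ((e.symm (Multiplicative.ofAdd (ρ (γ : Γ ⧸ L) x)) : L) : Γ)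
    rw [← this, MulEquiv.symm_apply_apply]
  have hzero : ι 0 = 1 := by simp [ι]
  have hpow : ∀ (k : ℕ) x, ι (k • x) = ι x ^ k := by
    intro k x
    simp only [ι]
    rw [ofAdd_nsmul, map_pow, Subgroup.coe_pow]
  have tors : ∀ l ∈ L, IsOfFinOrder l → l = 1 := by
    intro l hl h
    obtain ⟨x, rfl⟩ := (hrange l).1 hl
    obtain ⟨k, hk, h⟩ := isOfFinOrder_iff_pow_eq_one.1 h
    rw [← hpow, ← hzero] at h
    have h2 := hinj h
    rw [smul_eq_zero] at h2
    rw [h2.resolve_left hk.ne', hzero]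
  have free : ∀ γ ∉ L, ∀ l ∈ L, l * γ = γ * l → l = 1 := by
    intro γ hγ l hl h
    obtain ⟨x, rfl⟩ := (hrange l).1 hl
    by_contra hx
    refine hfree (γ : Γ ⧸ L) (fun h => hγ ((QuotientGroup.eq_one_iff γ).1 h)) x
      (fun h => hx (by rw [h, hzero])) (hinj ?_)
    rw [← hconj, ← h]
    group
  have hA : ∀ g : Γ ⧸ L, g ≠ 1 →
      Function.Injective (LinearMap.id - ρ g : (Fin n → ℤ) →ₗ[ℤ] (Fin n → ℤ)) := by
    intro g hg
    rw [injective_iff_map_eq_zero]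
    intro x hx
    by_contra hx0
    exact hfree g hg x hx0 (sub_eq_zero.1 hx).symm
  have hlink := aux_link L ι hadd hinj hrange ρ hconj
  have hfin : ∀ g : Γ ⧸ L, g ≠ 1 → Finite (Quotient (auxSetoid L g)) := by
    intro g hg
    have := aux_finite_quot _ (hA g hg)
    exact Finite.of_equiv _ (Classical.choice (hlink g))
  have hfinM := aux_finite L hcomm tors free hfin
  refine ⟨hfinM, fun H K h => aux_conj_map L hcomm _ _ h, ?_⟩
  intro g hg F hF
  rw [aux_sum L hcomm tors free hfinM hg (hfin g hg) F hF,
    ← Nat.card_congr (Classical.choice (hlink g)), aux_card_det _ (hA g hg)]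
  have hpos := aux_det_pos (d := m) (by omega) (ρ g)
    (by rw [← map_pow, ← hcard, pow_card_eq_one', map_one]) (hA g hg)
  have hbc : (LinearMap.id - LinearMap.baseChange ℚ (ρ g) :
      ℚ ⊗[ℤ] (Fin n → ℤ) →ₗ[ℚ] ℚ ⊗[ℤ] (Fin n → ℤ)) =
      LinearMap.baseChange ℚ (LinearMap.id - ρ g) := by
    rw [LinearMap.baseChange_sub, LinearMap.baseChange_id]
  rw [hbc, LinearMap.det_baseChange]
  have hcast : (((LinearMap.det (LinearMap.id - ρ g)).natAbs : ℤ) : ℚ) =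
      ((LinearMap.det (LinearMap.id - ρ g) : ℤ) : ℚ) := by
    rw [Int.natAbs_of_nonneg hpos.le]
  rw [Int.cast_natCast] at hcast
  rw [hcast]
  simp
end
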